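/- arXiv:2509.04568 — 4 statements merged into one kernel-verified Lean document; each statement's English description precedes it below -/
import Mathlib

section
/- For all integers d, k with 1 ≤ k ≤ d, the growth constant of closed (d,k)-self-avoiding manifolds satisfies the upper bound limsup_{n→∞} (c^SAM_{(d,k),n}(0))^{1/n} ≤ 2(d−k)+1. -/
open Filter

/-- A `k`-face of the hypercubic lattice `ℤ^d`: an orientation set `S ⊆ {1,…,d}`
together with a base vertex `v ∈ ℤ^d`. -/
abbrev Face (d : ℕ) := Finset (Fin d) × (Fin d → ℤ)

/-- The boundary `(k-1)`-edges of a `k`-face `(S, v)`: the `(k-1)`-faces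
`(S \ {i}, v)` and `(S \ {i}, v + e_i)` for `i ∈ S`. -/
def faceEdges {d : ℕ} (f : Face d) : Finset (Face d) :=
  f.1.biUnion fun i =>
    {(f.1.erase i, f.2), (f.1.erase i, f.2 + Pi.single i 1)}

/-- Two faces are adjacent if they are distinct and share a common boundary edge. -/
def FaceAdj {d : ℕ} (f g : Face d) : Prop :=
  f ≠ g ∧ ∃ e, e ∈ faceEdges f ∧ e ∈ faceEdges g

/-- A set of faces is connected with respect to adjacency. -/
def ConnectedFaces {d : ℕ} (M : Finset (Face d)) : Prop :=
  ∀ f ∈ M, ∀ g ∈ M, Relation.ReflTransGen (fun a b => a ∈ M ∧ b ∈ M ∧ FaceAdj a b) f g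

/-- A `(d,k)`-self-avoiding manifold of `k`-area `n`: a connected set of `n` `k`-faces
such that every `(k-1)`-edge bounds at most two of its `k`-faces. -/
def IsSAM (d k n : ℕ) (M : Finset (Face d)) : Prop :=
  M.card = n ∧ (∀ f ∈ M, f.1.card = k) ∧ ConnectedFaces M ∧
    ∀ e : Face d, (M.filter fun f => e ∈ faceEdges f).card ≤ 2

/-- A closed `(d,k)`-self-avoiding manifold: every boundary edge of every face
is shared by exactly two faces. -/
def IsClosedSAM (d k n : ℕ) (M : Finset (Face d)) : Prop :=
  IsSAM d k n M ∧ ∀ f ∈ M, ∀ e ∈ faceEdges f,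
    (M.filter fun g => e ∈ faceEdges g).card = 2

/-- A `(d,k)`-fixed polyominoid of `k`-area `n`: a connected set of `n` `k`-faces. -/
def IsXD (d k n : ℕ) (M : Finset (Face d)) : Prop :=
  M.card = n ∧ (∀ f ∈ M, f.1.card = k) ∧ ConnectedFaces M

/-- Translation of a face by a lattice vector. -/
def translateFace {d : ℕ} (t : Fin d → ℤ) (f : Face d) : Face d := (f.1, f.2 + t)

/-- Two sets of faces are translation-equivalent. -/
def TransEquiv {d : ℕ} (A B : Finset (Face d)) : Prop :=
  ∃ t : Fin d → ℤ, A.image (translateFace t) = B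

/-- The number of `(d,k)`-self-avoiding manifolds of `k`-area `n`, up to translation. -/
noncomputable def samCount (d k n : ℕ) : ℕ :=
  Nat.card (Quot fun A B : {M : Finset (Face d) // IsSAM d k n M} =>
    TransEquiv A.val B.val)

/-- The number of closed `(d,k)`-self-avoiding manifolds of `k`-area `n`, up to
translation. -/
noncomputable def closedSamCount (d k n : ℕ) : ℕ :=
  Nat.card (Quot fun A B : {M : Finset (Face d) // IsClosedSAM d k n M} =>
    TransEquiv A.val B.val)

/-- The number of `(d,k)`-fixed polyominoids of `k`-area `n`, up to translation. -/
noncomputable def xdCount (d k n : ℕ) : ℕ :=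
  Nat.card (Quot fun A B : {M : Finset (Face d) // IsXD d k n M} =>
    TransEquiv A.val B.val)


/-- Candidate faces having a given boundary edge. -/
def candFaces {d : ℕ} (e : Face d) : Finset (Face d) :=
  (e.1ᶜ).biUnion fun i =>
    {(insert i e.1, e.2), (insert i e.1, e.2 - Pi.single i 1)}

theorem mem_candFaces {d : ℕ} {e g : Face d} (h : e ∈ faceEdges g) : e.1.card + 1 = g.1.card ∧ g ∈ candFaces e := by
  obtain ⟨S, v⟩ := g
  simp only [faceEdges, Finset.mem_biUnion, Finset.mem_insert, Finset.mem_singleton] at h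
  obtain ⟨i, hi, h⟩ := h
  refine ⟨?_, ?_⟩
  · rcases h with rfl | rfl <;> exact Finset.card_erase_add_one hi
  · simp only [candFaces, Finset.mem_biUnion, Finset.mem_insert, Finset.mem_singleton]
    refine ⟨i, ?_, ?_⟩
    · rcases h with rfl | rfl <;> simp
    · rcases h with rfl | rfl
      · left; simp [Finset.insert_erase hi]
      · right; simp [Finset.insert_erase hi]

theorem card_candFaces {d : ℕ} (e : Face d) : (candFaces e).card ≤ 2 * (d - e.1.card) := by
  unfold candFaces
  refine (Finset.card_biUnion_le_card_mul _ _ 2 fun i _ => Finset.card_le_two).trans ?_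
  rw [Finset.card_compl, Fintype.card_fin, mul_comm]

theorem extend_count (d k : ℕ) (hkd : k ≤ d) (j : ℕ) : ∀ A : Finset (Face d),
    A.Nonempty → (∀ f ∈ A, f.1.card = k) →
    ∃ T : Finset (Finset (Face d)), T.card ≤ (2 * (d - k) + 1) ^ j ∧
      ∀ M, IsClosedSAM d k (A.card + j) M → A ⊆ M → M ∈ T := by
  classical
  induction j with
  | zero =>
    intro A _ _
    refine ⟨{A}, by simp, ?_⟩
    intro M hM hAM
    have := Finset.eq_of_subset_of_card_le hAM (by rw [hM.1.1]; simp)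
    simp [this]
  | succ j ih =>
    intro A hA hAk
    by_cases hopen : ∃ f ∈ A, ∃ e ∈ faceEdges f, (A.filter fun g => e ∈ faceEdges g).card ≠ 2
    · obtain ⟨f, hf, e, he, hne⟩ := hopen
      have hfc := mem_candFaces he
      let C : Finset (Face d) := ((candFaces e).erase f).filter fun g => g.1.card = k ∧ g ∉ A
      have hC : C.card ≤ 2 * (d - k) + 1 := by
        refine (Finset.card_filter_le _ _).trans ?_
        rw [Finset.card_erase_of_mem hfc.2]
        have h1 := card_candFaces e
        have h2 := hAk f hf
        have h3 := hfc.1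
        omega
      have key : ∀ g : Face d, ∃ T : Finset (Finset (Face d)), g ∈ C →
          T.card ≤ (2 * (d - k) + 1) ^ j ∧
          ∀ M, IsClosedSAM d k (A.card + (j + 1)) M → insert g A ⊆ M → M ∈ T := by
        intro g
        by_cases hg : g ∈ C
        · have hg' := (Finset.mem_filter.1 hg).2
          obtain ⟨T, hT, hT'⟩ := ih (insert g A) (Finset.insert_nonempty _ _) (by
            intro x hx
            rcases Finset.mem_insert.1 hx with rfl | hx
            · exact hg'.1
            · exact hAk x hx)
          refine ⟨T, fun _ => ⟨hT, fun M hM hs => hT' M ?_ hs⟩⟩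
          rw [Finset.card_insert_of_notMem hg'.2]
          have : A.card + 1 + j = A.card + (j + 1) := by omega
          rwa [this]
        · exact ⟨∅, fun h => absurd h hg⟩
      choose T hT using key
      refine ⟨C.biUnion T, ?_, ?_⟩
      · refine (Finset.card_biUnion_le_card_mul _ _ _ fun g hg => (hT g hg).1).trans ?_
        rw [pow_succ, mul_comm]
        exact Nat.mul_le_mul_left _ hC
      · intro M hM hAM
        have h2 := hM.2 f (hAM hf) e he
        have hsub : (A.filter fun g => e ∈ faceEdges g) ⊆ (M.filter fun g => e ∈ faceEdges g) :=
          Finset.filter_subset_filter _ hAM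
        have hlt : (A.filter fun g => e ∈ faceEdges g).card <
            (M.filter fun g => e ∈ faceEdges g).card := by
          have := Finset.card_le_card hsub
          omega
        obtain ⟨g, hgM, hgA⟩ := Finset.exists_mem_notMem_of_card_lt_card hlt
        rw [Finset.mem_filter] at hgM hgA
        have hgA' : g ∉ A := fun h => hgA ⟨h, hgM.2⟩
        have hgC : g ∈ C := by
          refine Finset.mem_filter.2 ⟨Finset.mem_erase.2 ⟨?_, (mem_candFaces hgM.2).2⟩,
            hM.1.2.1 g hgM.1, hgA'⟩
          rintro rfl
          exact hgA' hf
        exact Finset.mem_biUnion.2 ⟨g, hgC, (hT g hgC).2 M hM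
          (Finset.insert_subset hgM.1 hAM)⟩
    · push Not at hopen
      refine ⟨∅, by simp, ?_⟩
      intro M hM hAM
      exfalso
      obtain ⟨f0, hf0⟩ := hA
      have hall : M ⊆ A := by
        intro g hg
        have hr := hM.1.2.2.1 f0 (hAM hf0) g hg
        induction hr with
        | refl => exact hf0
        | tail _ hbc ihb =>
          rename_i b c _
          obtain ⟨hb, hc, _, e, heb, hec⟩ := hbc
          have hbA := ihb hb
          have heq := Finset.eq_of_subset_of_card_le
            (Finset.filter_subset_filter (fun g => e ∈ faceEdges g) hAM)
            (by rw [hopen b hbA e heb, hM.2 b hb e heb])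
          have : c ∈ A.filter (fun g => e ∈ faceEdges g) := by
            rw [heq]; exact Finset.mem_filter.2 ⟨hc, hec⟩
          exact (Finset.mem_filter.1 this).1
      have := Finset.card_le_card hall
      rw [hM.1.1] at this
      omega

theorem faceEdges_translate {d : ℕ} (t : Fin d → ℤ) (f : Face d) :
    faceEdges (translateFace t f) = (faceEdges f).image (translateFace t) := by
  ext e
  simp only [faceEdges, translateFace, Finset.mem_biUnion, Finset.mem_insert,
    Finset.mem_singleton, Finset.mem_image]
  constructor
  · rintro ⟨i, hi, rfl | rfl⟩
    · exact ⟨_, ⟨i, hi, Or.inl rfl⟩, rfl⟩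
    · exact ⟨_, ⟨i, hi, Or.inr rfl⟩, by simp [add_right_comm]⟩
  · rintro ⟨_, ⟨i, hi, rfl | rfl⟩, rfl⟩
    · exact ⟨i, hi, Or.inl rfl⟩
    · exact ⟨i, hi, Or.inr (by simp [add_right_comm])⟩

theorem translateFace_inj {d : ℕ} (t : Fin d → ℤ) :
    Function.Injective (translateFace t : Face d → Face d) := by
  rintro ⟨a, b⟩ ⟨a', b'⟩ h
  simpa [translateFace] using h

theorem translateFace_surj {d : ℕ} (t : Fin d → ℤ) :
    Function.Surjective (translateFace t : Face d → Face d) := by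
  rintro ⟨a, b⟩
  exact ⟨(a, b - t), by simp [translateFace]⟩

theorem filter_translate {d : ℕ} (t : Fin d → ℤ) (M : Finset (Face d)) (e : Face d) :
    ((M.image (translateFace t)).filter fun f => translateFace t e ∈ faceEdges f).card =
      (M.filter fun f => e ∈ faceEdges f).card := by
  rw [← Finset.card_image_of_injective (M.filter fun f => e ∈ faceEdges f) (translateFace_inj t),
    Finset.filter_image]
  congr 2
  ext f
  simp only [faceEdges_translate, (translateFace_inj t).mem_finset_image, Finset.mem_filter]

theorem closed_translate {d k n : ℕ} (t : Fin d → ℤ) {M : Finset (Face d)}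
    (hM : IsClosedSAM d k n M) : IsClosedSAM d k n (M.image (translateFace t)) := by
  obtain ⟨⟨h1, h2, h3, h4⟩, h5⟩ := hM
  refine ⟨⟨?_, ?_, ?_, ?_⟩, ?_⟩
  · rw [Finset.card_image_of_injective _ (translateFace_inj t), h1]
  · intro f hf
    obtain ⟨g, hg, rfl⟩ := Finset.mem_image.1 hf
    exact h2 g hg
  · intro f hf g hg
    obtain ⟨f, hf0, rfl⟩ := Finset.mem_image.1 hf
    obtain ⟨g, hg0, rfl⟩ := Finset.mem_image.1 hg
    refine Relation.ReflTransGen.lift (translateFace t) ?_ _ _ (h3 f hf0 g hg0)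
    rintro a b ⟨ha, hb, hab, e, hea, heb⟩
    refine ⟨Finset.mem_image_of_mem _ ha, Finset.mem_image_of_mem _ hb,
      (translateFace_inj t).ne hab, translateFace t e, ?_, ?_⟩
    · rw [faceEdges_translate]; exact Finset.mem_image_of_mem _ hea
    · rw [faceEdges_translate]; exact Finset.mem_image_of_mem _ heb
  · intro e
    obtain ⟨e, rfl⟩ := translateFace_surj t e
    rw [filter_translate]
    exact h4 e
  · intro f hf e he
    obtain ⟨f, hf0, rfl⟩ := Finset.mem_image.1 hf
    rw [faceEdges_translate] at he
    obtain ⟨e, he0, rfl⟩ := Finset.mem_image.1 he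
    rw [filter_translate]
    exact h5 f hf0 e he0

theorem closedSamCount_le (d k n : ℕ) (hkd : k ≤ d) :
    closedSamCount d k (n + 1) ≤ 2 ^ d * (2 * (d - k) + 1) ^ n := by
  classical
  have key : ∀ S : Finset (Fin d), ∃ T : Finset (Finset (Face d)),
      T.card ≤ (2 * (d - k) + 1) ^ n ∧
      ∀ M, IsClosedSAM d k (n + 1) M → ((S, 0) : Face d) ∈ M → M ∈ T := by
    intro S
    by_cases hS : S.card = k
    · obtain ⟨T, hT, hT'⟩ := extend_count d k hkd n {((S, 0) : Face d)}
        (Finset.singleton_nonempty _) (by simpa using hS)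
      refine ⟨T, hT, fun M hM h => hT' M ?_ (by simpa using h)⟩
      rw [Finset.card_singleton, add_comm]
      exact hM
    · exact ⟨∅, by simp, fun M hM h => absurd (hM.1.2.1 _ h) hS⟩
  choose T hT hT' using key
  let U := (Finset.univ : Finset (Finset (Fin d))).biUnion T
  have hU : U.card ≤ 2 ^ d * (2 * (d - k) + 1) ^ n := by
    refine (Finset.card_biUnion_le_card_mul _ _ _ fun S _ => hT S).trans ?_
    simp
  refine le_trans ?_ hU
  have hrep : ∀ q : Quot (fun A B : {M : Finset (Face d) // IsClosedSAM d k (n + 1) M} =>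
      TransEquiv A.val B.val), ∃ M, Quot.mk _ M = q ∧ M.val ∈ U := by
    intro q
    obtain ⟨⟨M, hM⟩, rfl⟩ := Quot.exists_rep q
    have hne : M.Nonempty := by
      rw [← Finset.card_pos, hM.1.1]; omega
    obtain ⟨⟨S, v⟩, hf⟩ := hne
    refine ⟨⟨M.image (translateFace (-v)), closed_translate _ hM⟩, ?_, ?_⟩
    · exact (Quot.sound ⟨-v, rfl⟩).symm
    · refine Finset.mem_biUnion.2 ⟨S, Finset.mem_univ _, hT' S _ (closed_translate _ hM) ?_⟩
      exact Finset.mem_image.2 ⟨_, hf, by simp [translateFace]⟩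
  choose r hr hrU using hrep
  have hinj : Function.Injective (fun q => (⟨(r q).val, hrU q⟩ : U)) := by
    intro a b hab
    have h : r a = r b := Subtype.ext (by simpa using hab)
    rw [← hr a, ← hr b, h]
  have := Nat.card_le_card_of_injective _ hinj
  rw [Nat.card_eq_fintype_card (α := U), Fintype.card_coe] at this
  exact this

theorem closedSamCount_limsup_upper_bound (d k : ℕ) (hk : 1 ≤ k) (hkd : k ≤ d) :
    limsup (fun n : ℕ => (closedSamCount d k n : ℝ) ^ (1 / (n : ℝ))) atTop ≤
      ((2 * (d - k) + 1 : ℕ) : ℝ) := by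
  have hb : ∀ᶠ n : ℕ in atTop, (closedSamCount d k n : ℝ) ^ (1 / (n : ℝ)) ≤
      ((2 : ℝ) ^ d) ^ (1 / (n : ℝ)) * ((2 * (d - k) + 1 : ℕ) : ℝ) := by
    filter_upwards [eventually_ge_atTop 1] with n hn
    obtain ⟨m, rfl⟩ : ∃ m, n = m + 1 := ⟨n - 1, by omega⟩
    set B : ℕ := 2 * (d - k) + 1 with hB
    have h1 : closedSamCount d k (m + 1) ≤ 2 ^ d * B ^ (m + 1) :=
      (closedSamCount_le d k m hkd).trans
        (Nat.mul_le_mul_left _ (Nat.pow_le_pow_right (by omega) (by omega)))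
    have h2 : (closedSamCount d k (m + 1) : ℝ) ≤ (2 : ℝ) ^ d * (B : ℝ) ^ (m + 1) := by
      exact_mod_cast h1
    calc (closedSamCount d k (m + 1) : ℝ) ^ (1 / ((m + 1 : ℕ) : ℝ))
        ≤ ((2 : ℝ) ^ d * (B : ℝ) ^ (m + 1)) ^ (1 / ((m + 1 : ℕ) : ℝ)) :=
          Real.rpow_le_rpow (by positivity) h2 (by positivity)
      _ = _ := by
          rw [Real.mul_rpow (by positivity) (by positivity), one_div,
            Real.pow_rpow_inv_natCast (by positivity) (by omega)]
  have ht : Tendsto (fun n : ℕ => ((2 : ℝ) ^ d) ^ (1 / (n : ℝ)) * ((2 * (d - k) + 1 : ℕ) : ℝ))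
      atTop (nhds ((2 * (d - k) + 1 : ℕ) : ℝ)) := by
    have h0 : Tendsto (fun n : ℕ => ((2 : ℝ) ^ d) ^ (1 / (n : ℝ))) atTop (nhds 1) := by
      have h3 : Tendsto (fun n : ℕ => 1 / (n : ℝ)) atTop (nhds 0) :=
        tendsto_one_div_atTop_nhds_zero_nat
      have := Filter.Tendsto.rpow (tendsto_const_nhds (x := (2 : ℝ) ^ d)) h3
        (Or.inl (by positivity))
      simpa using this
    simpa using h0.mul_const ((2 * (d - k) + 1 : ℕ) : ℝ)
  rw [← ht.limsup_eq]
  refine limsup_le_limsup hb ?_ ht.isBoundedUnder_le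
  exact isCoboundedUnder_le_of_le atTop (x := 0) fun n => by positivity
end

section
/- For all integers d, k with 1 ≤ k ≤ d, the growth constant of (d,k)-self-avoiding manifolds satisfies the lower bound liminf_{n→∞} (c^SAM_{(d,k),n})^{1/n} ≥ k(d−k+1). -/
open Filter

theorem mem_faceEdges_sam {d : ℕ} {f e : Face d} (h : e ∈ faceEdges f) :
    ∃ i ∈ f.1, e.1 = f.1.erase i ∧ (e.2 = f.2 ∨ e.2 = f.2 + Pi.single i 1) := by
  simp only [faceEdges, Finset.mem_biUnion, Finset.mem_insert, Finset.mem_singleton] at h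
  obtain ⟨i, hi, h | h⟩ := h
  · exact ⟨i, hi, by rw [h], Or.inl (by rw [h])⟩
  · exact ⟨i, hi, by rw [h], Or.inr (by rw [h])⟩

theorem faceAdj_symm_sam {d : ℕ} {f g : Face d} (h : FaceAdj f g) : FaceAdj g f := by
  obtain ⟨h1, e, h2, h3⟩ := h
  exact ⟨h1.symm, e, h3, h2⟩

abbrev SStep (d : ℕ) := Finset (Fin d) × (Fin d → Fin 3)

def sstep {d : ℕ} (s : SStep d) (f : Face d) : Face d :=
  (s.1, fun x => f.2 x + ((s.2 x : ℕ) : ℤ) - 1)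

theorem exists_sstep {d : ℕ} {f g : Face d} (h : FaceAdj f g) : ∃ s, sstep s f = g := by
  obtain ⟨_, e, h2, h3⟩ := h
  obtain ⟨i, _, _, hi⟩ := mem_faceEdges_sam h2
  obtain ⟨j, _, _, hj⟩ := mem_faceEdges_sam h3
  have key : ∀ x, ∃ a : Fin 3, f.2 x + ((a : ℕ) : ℤ) - 1 = g.2 x := by
    intro x
    have a1 : e.2 x = f.2 x ∨ e.2 x = f.2 x + 1 := by
      rcases hi with hi | hi
      · left; rw [hi]
      · rw [hi, Pi.add_apply, Pi.single_apply]; split_ifs <;> simp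
    have a2 : e.2 x = g.2 x ∨ e.2 x = g.2 x + 1 := by
      rcases hj with hj | hj
      · left; rw [hj]
      · rw [hj, Pi.add_apply, Pi.single_apply]; split_ifs <;> simp
    refine ⟨⟨(g.2 x - f.2 x + 1).toNat, by omega⟩, ?_⟩
    simp only
    omega
  choose a ha using key
  exact ⟨(g.1, a), Prod.ext rfl (funext ha)⟩

def svisited {d : ℕ} : Face d → List (SStep d) → Finset (Face d)
  | f, [] => {f}
  | f, s :: w => insert f (svisited (sstep s f) w)

theorem self_mem_svisited {d : ℕ} (f : Face d) (w : List (SStep d)) : f ∈ svisited f w := by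
  cases w <;> simp [svisited]

theorem svisited_insert {d : ℕ} {g g' : Face d} (h : FaceAdj g' g) (w : List (SStep d)) :
    ∀ f, g' ∈ svisited f w →
      ∃ w' : List (SStep d), w'.length = w.length + 2 ∧
        svisited f w' = insert g (svisited f w) := by
  have base : ∀ w : List (SStep d), ∃ w' : List (SStep d), w'.length = w.length + 2 ∧
        svisited g' w' = insert g (svisited g' w) := by
    intro w
    obtain ⟨s, hs⟩ := exists_sstep h
    obtain ⟨t, ht⟩ := exists_sstep (faceAdj_symm_sam h)
    refine ⟨s :: t :: w, rfl, ?_⟩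
    simp only [svisited, hs, ht]
    rw [Finset.insert_comm, Finset.insert_eq_of_mem (self_mem_svisited g' w)]
  induction w with
  | nil =>
    intro f hf
    simp only [svisited, Finset.mem_singleton] at hf
    subst hf
    exact base []
  | cons s w ih =>
    intro f hf
    by_cases hfg : g' = f
    · subst hfg; exact base _
    · simp only [svisited, Finset.mem_insert, hfg, false_or] at hf
      obtain ⟨w', h1, h2⟩ := ih _ hf
      refine ⟨s :: w', by simp [h1], ?_⟩
      simp only [svisited, h2]
      rw [Finset.insert_comm]

theorem exists_leaving {d : ℕ} {M A : Finset (Face d)} (hM : ConnectedFaces M) (hA : A ⊆ M)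
    (hne : A ≠ M) {f : Face d} (hf : f ∈ A) :
    ∃ g' ∈ A, ∃ g ∈ M, g ∉ A ∧ FaceAdj g' g := by
  by_contra! hcon
  apply hne
  apply Finset.Subset.antisymm hA
  intro g hg
  have := hM f (hA hf) g hg
  induction this with
  | refl => exact hf
  | tail _ h ih =>
    by_contra hc
    exact hcon _ (ih h.1) _ h.2.1 hc h.2.2

theorem exists_svisited {d : ℕ} {M : Finset (Face d)} (hM : ConnectedFaces M) {f : Face d}
    (hf : f ∈ M) (m : ℕ) : m + 1 ≤ M.card → ∃ w : List (SStep d), w.length = 2 * m ∧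
      svisited f w ⊆ M ∧ (svisited f w).card = m + 1 := by
  induction m with
  | zero => intro _; exact ⟨[], rfl, by simpa [svisited] using hf, by simp [svisited]⟩
  | succ m ih =>
    intro hm
    obtain ⟨w, h1, h2, h3⟩ := ih (by omega)
    obtain ⟨g', hg', g, hg, hgA, hadj⟩ := exists_leaving hM h2
      (by intro h; rw [h] at h3; omega) (self_mem_svisited f w)
    obtain ⟨w', h4, h5⟩ := svisited_insert hadj w f hg'
    refine ⟨w', by omega, ?_, ?_⟩
    · rw [h5]; exact Finset.insert_subset hg h2
    · rw [h5, Finset.card_insert_of_notMem hgA, h3]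

theorem translateFace_injective {d : ℕ} (t : Fin d → ℤ) :
    Function.Injective (translateFace (d := d) t) := by
  intro a b h
  simp only [translateFace, Prod.mk.injEq, add_left_inj] at h
  exact Prod.ext h.1 h.2

theorem mem_faceEdges_translate {d : ℕ} (t : Fin d → ℤ) (f e : Face d) :
    translateFace t e ∈ faceEdges (translateFace t f) ↔ e ∈ faceEdges f := by
  obtain ⟨S, v⟩ := f
  obtain ⟨T, u⟩ := e
  simp only [faceEdges, translateFace, Finset.mem_biUnion, Finset.mem_insert,
    Finset.mem_singleton, Prod.mk.injEq, add_left_inj]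
  have : ∀ i, (u + t = v + t + Pi.single i 1 ↔ u = v + Pi.single i 1) := by
    intro i
    rw [add_right_comm, add_left_inj]
  simp only [this]

theorem IsSAM.translate {d k n : ℕ} {M : Finset (Face d)} (h : IsSAM d k n M) (t : Fin d → ℤ) :
    IsSAM d k n (M.image (translateFace t)) := by
  obtain ⟨h1, h2, h3, h4⟩ := h
  refine ⟨?_, ?_, ?_, ?_⟩
  · rw [Finset.card_image_of_injective _ (translateFace_injective t), h1]
  · intro f hf
    obtain ⟨g, hg, rfl⟩ := Finset.mem_image.1 hf
    exact h2 g hg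
  · intro f hf g hg
    obtain ⟨f', hf', rfl⟩ := Finset.mem_image.1 hf
    obtain ⟨g', hg', rfl⟩ := Finset.mem_image.1 hg
    refine Relation.ReflTransGen.lift (translateFace t) ?_ _ _ (h3 f' hf' g' hg')
    rintro a b ⟨ha, hb, hne, e, he1, he2⟩
    exact ⟨Finset.mem_image_of_mem _ ha, Finset.mem_image_of_mem _ hb,
      fun h => hne (translateFace_injective t h), translateFace t e,
      (mem_faceEdges_translate t _ _).2 he1, (mem_faceEdges_translate t _ _).2 he2⟩
  · intro e
    have he : e = translateFace t (translateFace (-t) e) := by simp [translateFace]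
    rw [he, Finset.filter_image, Finset.card_image_of_injective _ (translateFace_injective t)]
    simp only [mem_faceEdges_translate]
    exact h4 _

theorem code_exists (d k n : ℕ) (q : Quot fun A B : {M : Finset (Face d) // IsSAM d k (n+1) M} =>
    TransEquiv A.val B.val) :
    ∃ c : Finset (Fin d) × List.Vector (SStep d) (2 * n),
      ∃ A : {M : Finset (Face d) // IsSAM d k (n+1) M}, Quot.mk _ A = q ∧
        A.val = svisited (c.1, 0) c.2.1 := by
  obtain ⟨⟨M, hM⟩, rfl⟩ := Quot.exists_rep q
  have hpos : 0 < M.card := by rw [hM.1]; omega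
  obtain ⟨f, hf⟩ := Finset.card_pos.1 hpos
  have hM' := hM.translate (-f.2)
  have hf' : ((f.1, 0) : Face d) ∈ M.image (translateFace (-f.2)) :=
    Finset.mem_image.2 ⟨f, hf, by simp [translateFace]⟩
  obtain ⟨w, h1, h2, h3⟩ := exists_svisited hM'.2.2.1 hf' n (by rw [hM'.1])
  refine ⟨(f.1, ⟨w, h1⟩), ⟨_, hM'⟩, (Quot.sound ⟨-f.2, rfl⟩).symm, ?_⟩
  exact (Finset.eq_of_subset_of_card_le h2 (by rw [hM'.1, h3])).symm

theorem code_injective (d k n : ℕ) : ∃ F : (Quot fun A B : {M : Finset (Face d) //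
    IsSAM d k (n+1) M} => TransEquiv A.val B.val) →
      Finset (Fin d) × List.Vector (SStep d) (2 * n), Function.Injective F := by
  choose F hF using code_exists d k n
  refine ⟨F, ?_⟩
  intro q q' h
  obtain ⟨A, hA, hA'⟩ := hF q
  obtain ⟨B, hB, hB'⟩ := hF q'
  rw [← hA, ← hB]
  congr 1
  apply Subtype.ext
  rw [hA', hB', h]

theorem samCount_finite (d k n : ℕ) : Finite (Quot fun A B : {M : Finset (Face d) //
    IsSAM d k (n+1) M} => TransEquiv A.val B.val) := by
  obtain ⟨F, hF⟩ := code_injective d k n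
  exact Finite.of_injective F hF

theorem samCount_le (d k n : ℕ) :
    samCount d k (n+1) ≤ 2 ^ d * (Fintype.card (SStep d)) ^ (2 * n) := by
  obtain ⟨F, hF⟩ := code_injective d k n
  have := Nat.card_le_card_of_injective F hF
  rw [Nat.card_eq_fintype_card (α := Finset (Fin d) × List.Vector (SStep d) (2 * n)),
    Fintype.card_prod, card_vector, Fintype.card_finset,
    Fintype.card_fin] at this
  exact this

/-! Lower bound -/

def GoodStep {d K : ℕ} (k : ℕ) (I : Finset (Fin d) → Fin K → Fin d)
    (N : Finset (Fin d) → Fin K → Finset (Fin d)) : Prop :=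
  ∀ S : Finset (Fin d), S.card = k →
    (∀ c, I S c ∈ S ∧ ∃ j, j ∉ S.erase (I S c) ∧ N S c = insert j (S.erase (I S c))) ∧
    ∀ c c', I S c = I S c' → N S c = N S c' → c = c'

theorem exists_goodStep (d k : ℕ) (hk : 1 ≤ k) (hkd : k ≤ d) :
    ∃ (I : Finset (Fin d) → Fin (k * (d - k + 1)) → Fin d)
      (N : Finset (Fin d) → Fin (k * (d - k + 1)) → Finset (Fin d)), GoodStep k I N := by
  have key : ∀ S : Finset (Fin d), ∃ (i : Fin (k * (d - k + 1)) → Fin d)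
      (N : Fin (k * (d - k + 1)) → Finset (Fin d)), S.card = k →
    (∀ c, i c ∈ S ∧ ∃ j, j ∉ S.erase (i c) ∧ N c = insert j (S.erase (i c))) ∧
    ∀ c c', i c = i c' → N c = N c' → c = c' := by
    intro S
    by_cases hS : S.card = k
    · let P : Finset (Σ _ : Fin d, Fin d) := S.sigma fun i => (S.erase i)ᶜ
      have hP : P.card = k * (d - k + 1) := by
        rw [Finset.card_sigma, Finset.sum_congr rfl (g := fun _ => d - k + 1), Finset.sum_const,
          hS, smul_eq_mul]
        intro i hi
        rw [Finset.card_compl, Finset.card_erase_of_mem hi, hS, Fintype.card_fin]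
        omega
      let E := (P.equivFinOfCardEq hP).symm
      have hE : ∀ c, (E c).1.1 ∈ S ∧ (E c).1.2 ∉ S.erase (E c).1.1 := by
        intro c
        have := (E c).2
        simpa only [P, Finset.mem_sigma, Finset.mem_compl] using this
      refine ⟨fun c => (E c).1.1, fun c => insert (E c).1.2 (S.erase (E c).1.1), fun _ => ⟨?_, ?_⟩⟩
      · intro c
        exact ⟨(hE c).1, (E c).1.2, (hE c).2, rfl⟩
      · intro c c' h1 h2
        simp only at h1 h2
        apply E.injective
        apply Subtype.ext
        have h3 : (E c).1.2 = (E c').1.2 := by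
          have h4 : (E c).1.2 ∈ insert (E c').1.2 (S.erase (E c').1.1) := by
            rw [← h2]; exact Finset.mem_insert_self _ _
          rcases Finset.mem_insert.1 h4 with h | h
          · exact h
          · rw [← h1] at h; exact absurd h (hE c).2
        exact Sigma.ext h1 (heq_of_eq h3)
    · have : 0 < d := by omega
      exact ⟨fun _ => ⟨0, this⟩, fun _ => ∅, fun h => absurd h hS⟩
  choose I N h using key
  exact ⟨I, N, h⟩

section paths
variable {d K k : ℕ} {I : Finset (Fin d) → Fin K → Fin d}
    {N : Finset (Fin d) → Fin K → Finset (Fin d)}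

def spath (I : Finset (Fin d) → Fin K → Fin d)
    (N : Finset (Fin d) → Fin K → Finset (Fin d)) :
    Finset (Fin d) → (Fin d → ℤ) → List (Fin K) → Finset (Face d)
  | S, v, [] => {(S, v)}
  | S, v, c :: w => insert (S, v) (spath I N (N S c) (v + Pi.single (I S c) 1) w)

theorem goodStep_card (hG : GoodStep k I N) {S : Finset (Fin d)} (hS : S.card = k) (c : Fin K) :
    (N S c).card = k := by
  obtain ⟨h1, j, h2, h3⟩ := (hG S hS).1 c
  rw [h3, Finset.card_insert_of_notMem h2, Finset.card_erase_of_mem h1, hS]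
  have : 0 < S.card := Finset.card_pos.2 ⟨_, h1⟩
  omega

theorem sum_add_single (v : Fin d → ℤ) (i : Fin d) :
    ∑ x, (v + Pi.single i 1 : Fin d → ℤ) x = ∑ x, v x + 1 := by
  simp [Finset.sum_add_distrib]

theorem self_mem_spath (S : Finset (Fin d)) (v : Fin d → ℤ) (w : List (Fin K)) :
    (S, v) ∈ spath I N S v w := by
  cases w <;> simp [spath]

theorem spath_min (w : List (Fin K)) : ∀ (S : Finset (Fin d)) (v : Fin d → ℤ),
    ∀ f ∈ spath I N S v w, f = (S, v) ∨ ∑ x, v x + 1 ≤ ∑ x, f.2 x := by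
  induction w with
  | nil => intro S v f hf; left; simpa [spath] using hf
  | cons c w ih =>
    intro S v f hf
    simp only [spath, Finset.mem_insert] at hf
    rcases hf with hf | hf
    · exact Or.inl hf
    · right
      rcases ih _ _ f hf with h | h
      · rw [h]; simp only; rw [sum_add_single]
      · rw [sum_add_single] at h; omega

theorem spath_notMem (w : List (Fin K)) (S S' : Finset (Fin d)) (v : Fin d → ℤ) (i : Fin d) :
    (S, v) ∉ spath I N S' (v + Pi.single i 1) w := by
  intro h
  have hs := sum_add_single v i
  rcases spath_min w _ _ _ h with h | h
  · have h2 := congrArg (fun f : Face d => ∑ x, f.2 x) h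
    simp only at h2
    omega
  · simp only at h
    omega

theorem spath_start_eq {S S' : Finset (Fin d)} {v v' : Fin d → ℤ} {w w' : List (Fin K)}
    (h : spath I N S v w = spath I N S' v' w') : (S, v) = (S', v') := by
  have h1 : (S, v) ∈ spath I N S' v' w' := h ▸ self_mem_spath S v w
  have h2 : (S', v') ∈ spath I N S v w := h ▸ self_mem_spath S' v' w'
  rcases spath_min _ _ _ _ h1 with h1 | h1
  · exact h1
  · rcases spath_min _ _ _ _ h2 with h2 | h2
    · exact h2.symm
    · simp only at h1 h2; omega

theorem spath_injective (hG : GoodStep k I N) (w : List (Fin K)) :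
    ∀ (S : Finset (Fin d)) (v : Fin d → ℤ) (w' : List (Fin K)), S.card = k →
      w.length = w'.length → spath I N S v w = spath I N S v w' → w = w' := by
  induction w with
  | nil => intro S v w' _ h _; exact (List.length_eq_zero_iff.1 h.symm).symm
  | cons c w ih =>
    intro S v w' hS hl h
    cases w' with
    | nil => simp at hl
    | cons c' w' =>
      simp only [spath] at h
      have h' := congrArg (fun M => Finset.erase M (S, v)) h
      simp only [Finset.erase_insert (spath_notMem _ _ _ _ _)] at h'
      have h2 := spath_start_eq h'
      simp only [Prod.mk.injEq, add_right_inj] at h2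
      have hi : I S c = I S c' := by
        by_contra hne
        have := congrFun h2.2 (I S c)
        simp [hne] at this
      have hc := (hG S hS).2 c c' hi h2.1
      subst hc
      rw [ih _ _ w' (goodStep_card hG hS c) (by simpa using hl) h']

theorem spath_translate (t : Fin d → ℤ) (w : List (Fin K)) :
    ∀ (S : Finset (Fin d)) (v : Fin d → ℤ),
    (spath I N S v w).image (translateFace t) = spath I N S (v + t) w := by
  induction w with
  | nil => intro S v; simp [spath, translateFace]
  | cons c w ih =>
    intro S v
    simp only [spath, Finset.image_insert, ih]
    rw [add_right_comm]
    rfl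

theorem spath_card (w : List (Fin K)) : ∀ (S : Finset (Fin d)) (v : Fin d → ℤ),
    (spath I N S v w).card = w.length + 1 := by
  induction w with
  | nil => intro S v; simp [spath]
  | cons c w ih =>
    intro S v
    rw [spath, Finset.card_insert_of_notMem (spath_notMem _ _ _ _ _), ih, List.length_cons]

theorem spath_faces (hG : GoodStep k I N) (w : List (Fin K)) :
    ∀ (S : Finset (Fin d)) (v : Fin d → ℤ), S.card = k →
    ∀ f ∈ spath I N S v w, f.1.card = k := by
  induction w with
  | nil => intro S v hS f hf; simp only [spath, Finset.mem_singleton] at hf; rw [hf]; exact hS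
  | cons c w ih =>
    intro S v hS f hf
    simp only [spath, Finset.mem_insert] at hf
    rcases hf with hf | hf
    · rw [hf]; exact hS
    · exact ih _ _ (goodStep_card hG hS c) f hf

theorem spath_sum_inj (w : List (Fin K)) : ∀ (S : Finset (Fin d)) (v : Fin d → ℤ),
    ∀ f ∈ spath I N S v w, ∀ g ∈ spath I N S v w, ∑ x, f.2 x = ∑ x, g.2 x → f = g := by
  induction w with
  | nil => intro S v f hf g hg _; simp only [spath, Finset.mem_singleton] at hf hg; rw [hf, hg]
  | cons c w ih =>
    intro S v f hf g hg h
    have hf1 := spath_min _ _ _ f hf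
    have hg1 := spath_min _ _ _ g hg
    rcases hf1 with hf1 | hf1
    · rcases hg1 with hg1 | hg1
      · rw [hf1, hg1]
      · rw [hf1] at h; simp only at h; omega
    · rcases hg1 with hg1 | hg1
      · rw [hg1] at h; simp only at h; omega
      · simp only [spath, Finset.mem_insert] at hf hg
        rcases hf with hf | hf
        · rw [hf] at hf1; simp only at hf1; omega
        · rcases hg with hg | hg
          · rw [hg] at hg1; simp only at hg1; omega
          · exact ih _ _ f hf g hg h

theorem spath_adj (hG : GoodStep k I N) {S : Finset (Fin d)} (hS : S.card = k) (v : Fin d → ℤ)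
    (c : Fin K) : FaceAdj (S, v) (N S c, v + Pi.single (I S c) 1) := by
  obtain ⟨h1, j, h2, h3⟩ := (hG S hS).1 c
  refine ⟨?_, (S.erase (I S c), v + Pi.single (I S c) 1), ?_, ?_⟩
  · intro h
    have h := congrArg (fun f : Face d => ∑ x, f.2 x) h
    simp only at h
    rw [sum_add_single] at h
    omega
  · simp only [faceEdges, Finset.mem_biUnion, Finset.mem_insert]
    exact ⟨I S c, h1, by simp⟩
  · simp only [faceEdges, Finset.mem_biUnion, Finset.mem_insert]
    refine ⟨j, by rw [h3]; exact Finset.mem_insert_self _ _, ?_⟩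
    left
    rw [h3, Finset.erase_insert h2]

theorem spath_reach (hG : GoodStep k I N) (M : Finset (Face d)) (w : List (Fin K)) :
    ∀ (S : Finset (Fin d)) (v : Fin d → ℤ), S.card = k → spath I N S v w ⊆ M →
    ∀ f ∈ spath I N S v w,
      Relation.ReflTransGen (fun a b => a ∈ M ∧ b ∈ M ∧ FaceAdj a b) (S, v) f := by
  induction w with
  | nil =>
    intro S v _ _ f hf
    simp only [spath, Finset.mem_singleton] at hf
    rw [hf]
  | cons c w ih =>
    intro S v hS hM f hf
    have hmem := hM (self_mem_spath S v (c :: w))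
    simp only [spath, Finset.insert_subset_iff, Finset.mem_insert] at hf hM
    rcases hf with hf | hf
    · rw [hf]
    · refine Relation.ReflTransGen.head ⟨hmem, hM.2 (self_mem_spath _ _ _), spath_adj hG hS v c⟩
        (ih _ _ (goodStep_card hG hS c) hM.2 f hf)

theorem spath_isSAM (hG : GoodStep k I N) (w : List (Fin K)) (S : Finset (Fin d))
    (v : Fin d → ℤ) (hS : S.card = k) : IsSAM d k (w.length + 1) (spath I N S v w) := by
  refine ⟨spath_card w S v, spath_faces hG w S v hS, ?_, ?_⟩
  · intro f hf g hg
    have h1 := spath_reach hG _ w S v hS (Finset.Subset.refl _) f hf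
    have h2 := spath_reach hG _ w S v hS (Finset.Subset.refl _) g hg
    have hs : Std.Symm (fun a b => a ∈ spath I N S v w ∧ b ∈ spath I N S v w ∧ FaceAdj a b) :=
      ⟨fun a b hab => ⟨hab.2.1, hab.1, faceAdj_symm_sam hab.2.2⟩⟩
    exact Relation.ReflTransGen.trans (Relation.ReflTransGen.stdSymm.symm _ _ h1) h2
  · intro e
    have : (Finset.card ({∑ x, e.2 x, ∑ x, e.2 x - 1} : Finset ℤ)) ≤ 2 := Finset.card_le_two
    refine le_trans (Finset.card_le_card_of_injOn (fun f : Face d => ∑ x, f.2 x) ?_ ?_) this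
    · intro f hf
      obtain ⟨_, hf⟩ := Finset.mem_filter.1 hf
      obtain ⟨i, _, _, h | h⟩ := mem_faceEdges_sam hf
      · simp [h]
      · rw [h, sum_add_single]; simp
    · intro f hf g hg h
      exact spath_sum_inj w S v f (Finset.mem_filter.1 hf).1 g (Finset.mem_filter.1 hg).1 h

end paths

theorem transEquiv_equivalence (d : ℕ) : Equivalence (TransEquiv (d := d)) := by
  refine ⟨fun A => ⟨0, ?_⟩, ?_, ?_⟩
  · have : translateFace (0 : Fin d → ℤ) = id := by
      funext f; simp [translateFace]
    rw [this, Finset.image_id]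
  · rintro A B ⟨t, rfl⟩
    refine ⟨-t, ?_⟩
    have : translateFace (-t) ∘ translateFace t = id := by
      funext f; simp [translateFace]
    rw [Finset.image_image, this, Finset.image_id]
  · rintro A B C ⟨t, rfl⟩ ⟨s, rfl⟩
    refine ⟨t + s, ?_⟩
    rw [Finset.image_image]
    congr 1
    funext f; simp [translateFace, add_assoc]

theorem le_samCount (d k n : ℕ) (hk : 1 ≤ k) (hkd : k ≤ d) :
    (k * (d - k + 1)) ^ n ≤ samCount d k (n+1) := by
  obtain ⟨I, N, hG⟩ := exists_goodStep d k hk hkd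
  obtain ⟨S, hS⟩ : ∃ S : Finset (Fin d), S.card = k := by
    obtain ⟨S, _, hS⟩ := Finset.exists_subset_card_eq (s := (Finset.univ : Finset (Fin d)))
      (n := k) (by simpa using hkd)
    exact ⟨S, hS⟩
  have := samCount_finite d k n
  let F : List.Vector (Fin (k * (d - k + 1))) n → Quot fun A B : {M : Finset (Face d) //
    IsSAM d k (n+1) M} => TransEquiv A.val B.val := fun w =>
      Quot.mk _ ⟨spath I N S 0 w.1, by
        have := spath_isSAM hG w.1 S 0 hS
        rwa [w.2] at this⟩
  have hF : Function.Injective F := by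
    intro w w' h
    have h1 := Quot.eqvGen_exact h
    have heq : Equivalence (fun A B : {M : Finset (Face d) // IsSAM d k (n+1) M} =>
        TransEquiv A.val B.val) := (transEquiv_equivalence d).comap Subtype.val
    rw [heq.eqvGen_iff] at h1
    obtain ⟨t, ht⟩ := h1
    simp only at ht
    rw [spath_translate] at ht
    have h2 := spath_start_eq ht
    simp only [Prod.mk.injEq, true_and] at h2
    rw [h2] at ht
    exact Subtype.ext (spath_injective hG w.1 S 0 w'.1 hS (by rw [w.2, w'.2]) ht)
  have h := Nat.card_le_card_of_injective F hF
  rw [Nat.card_eq_fintype_card, card_vector, Fintype.card_fin] at h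
  exact h

theorem samCount_liminf_lower_bound (d k : ℕ) (hk : 1 ≤ k) (hkd : k ≤ d) :
    ((k * (d - k + 1) : ℕ) : ℝ) ≤
      liminf (fun n : ℕ => (samCount d k n : ℝ) ^ (1 / (n : ℝ))) atTop := by
  set K := k * (d - k + 1) with hK
  have hKpos : 0 < K := Nat.mul_pos hk (Nat.succ_pos _)
  have hKr : (0 : ℝ) < K := by exact_mod_cast hKpos
  have hlim : Tendsto (fun n : ℕ => (K : ℝ) ^ (1 - 1 / (n : ℝ))) atTop (nhds (K : ℝ)) := by
    have h1 : Tendsto (fun n : ℕ => 1 - 1 / (n : ℝ)) atTop (nhds (1 - 0)) :=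
      tendsto_const_nhds.sub tendsto_one_div_atTop_nhds_zero_nat
    have h2 := (tendsto_const_nhds (x := (K : ℝ))).rpow h1 (Or.inl hKr.ne')
    simpa using h2
  rw [← hlim.liminf_eq]
  refine liminf_le_liminf ?_ hlim.isBoundedUnder_ge ?_
  · filter_upwards [eventually_ge_atTop 1] with n hn
    obtain ⟨m, rfl⟩ : ∃ m, n = m + 1 := ⟨n - 1, by omega⟩
    have h := le_samCount d k m hk hkd
    rw [← hK] at h
    have h' : (K : ℝ) ^ m ≤ samCount d k (m+1) := by exact_mod_cast h
    have hm : ((m + 1 : ℕ) : ℝ) ≠ 0 := by positivity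
    calc (K : ℝ) ^ (1 - 1 / ((m + 1 : ℕ) : ℝ))
        = ((K : ℝ) ^ m) ^ (1 / ((m + 1 : ℕ) : ℝ)) := by
          rw [← Real.rpow_natCast, ← Real.rpow_mul hKr.le]
          congr 1
          field_simp
          push_cast
          ring
      _ ≤ _ := Real.rpow_le_rpow (by positivity) h' (by positivity)
  · apply IsBoundedUnder.isCoboundedUnder_ge
    set D : ℝ := 2 ^ d * (Fintype.card (SStep d) : ℝ) ^ 2 with hD
    have hc : (1 : ℝ) ≤ Fintype.card (SStep d) := by
      exact_mod_cast Fintype.card_pos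
    refine isBoundedUnder_of_eventually_le (a := D) ?_
    filter_upwards [eventually_ge_atTop 1] with n hn
    obtain ⟨m, rfl⟩ : ∃ m, n = m + 1 := ⟨n - 1, by omega⟩
    have h := samCount_le d k m
    have h' : (samCount d k (m+1) : ℝ) ≤ 2 ^ d * (Fintype.card (SStep d) : ℝ) ^ (2 * m) := by
      exact_mod_cast h
    have h2 : (2 : ℝ) ^ d * (Fintype.card (SStep d) : ℝ) ^ (2 * m) ≤ D ^ (m + 1) := by
      rw [hD, mul_pow, ← pow_mul (Fintype.card (SStep d) : ℝ)]
      refine mul_le_mul ?_ (pow_le_pow_right₀ hc (by omega)) (by positivity) (by positivity)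
      exact le_self_pow₀ (one_le_pow₀ (by norm_num)) (by omega)
    have hDn : 0 ≤ D := by positivity
    calc (samCount d k (m+1) : ℝ) ^ (1 / ((m + 1 : ℕ) : ℝ))
        ≤ (D ^ (m + 1)) ^ (1 / ((m + 1 : ℕ) : ℝ)) :=
          Real.rpow_le_rpow (by positivity) (h'.trans h2) (by positivity)
      _ = D := by
          rw [one_div]
          exact Real.pow_rpow_inv_natCast hDn (by omega)
end

section
/- The growth constant of self-avoiding surfaces on the cubic lattice, i.e. of (3,2)-self-avoiding manifolds, satisfies the upper bound limsup_{n→∞} (c^SAM_{(3,2),n})^{1/n} ≤ 17.11728. -/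
open Filter

abbrev Dir := Fin 3 × Bool

namespace Sas

def off (d : Dir) : Fin 3 → ℤ := if d.2 then 0 else - Pi.single d.1 1
def vec (d : Dir) : Fin 3 → ℤ := if d.2 then Pi.single d.1 1 else - Pi.single d.1 1
def opp (d : Dir) : Dir := (d.1, !d.2)
def edge (v : Fin 3 → ℤ) (d : Dir) : Face 3 := ({d.1}, v + off d)
def sq (v : Fin 3 → ℤ) (d d' : Dir) : Face 3 := ({d.1, d'.1}, v + off d + off d')

lemma sq_comm (v) (d d' : Dir) : sq v d d' = sq v d' d := by
  simp only [sq, Finset.pair_comm, add_right_comm]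

lemma vec_off (d : Dir) : vec d + off (opp d) = off d := by
  rcases d with ⟨i, _ | _⟩ <;> simp [vec, off, opp]

lemma edge_opp (v) (d : Dir) : edge (v + vec d) (opp d) = edge v d := by
  simp only [edge, add_assoc, vec_off]; rfl

lemma sq_opp (v) (d d' : Dir) : sq (v + vec d') d (opp d') = sq v d d' := by
  have : v + vec d' + off d + off (opp d') = v + off d + off d' := by
    rw [← vec_off d']; abel
  simp only [sq, this]; rfl

lemma mem_sq (v) (d d' : Dir) (h : d.1 ≠ d'.1) (e : Face 3) :
    e ∈ faceEdges (sq v d d') ↔ e = edge v d ∨ e = edge v d' ∨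
      e = edge (v + vec d) d' ∨ e = edge (v + vec d') d := by
  have h1 : ({d.1, d'.1} : Finset (Fin 3)).erase d.1 = {d'.1} := by
    rw [Finset.erase_insert]; simpa using h
  have h2 : ({d.1, d'.1} : Finset (Fin 3)).erase d'.1 = {d.1} := by
    rw [Finset.pair_comm, Finset.erase_insert]; simpa using h.symm
  simp only [faceEdges, sq, Finset.mem_biUnion, Finset.mem_insert, Finset.mem_singleton,
    exists_eq_or_imp, exists_eq_left, h1, h2, edge]
  rcases d with ⟨i, _ | _⟩ <;> rcases d' with ⟨j, _ | _⟩ <;>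
    simp [off, vec, add_assoc, add_comm, add_left_comm] <;> tauto

lemma exists_sq (v) (d : Dir) (f : Face 3) (h : edge v d ∈ faceEdges f) :
    ∃ d' : Dir, d'.1 ≠ d.1 ∧ f = sq v d d' := by
  obtain ⟨S, u⟩ := f
  simp only [faceEdges, Finset.mem_biUnion, Finset.mem_insert, Finset.mem_singleton, edge,
    Prod.mk.injEq] at h
  obtain ⟨i, hi, h⟩ := h
  have key : {d.1} = S.erase i → i ≠ d.1 ∧ S = {d.1, i} := by
    intro h
    constructor
    · rintro rfl
      have : d.1 ∈ S.erase d.1 := by rw [← h]; simp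
      simp at this
    · rw [← Finset.insert_erase hi, ← h, Finset.pair_comm]
  rcases h with ⟨h1, h2⟩ | ⟨h1, h2⟩
  · obtain ⟨a, b⟩ := key h1
    exact ⟨(i, true), a, by simp [sq, b, ← h2, off]⟩
  · obtain ⟨a, b⟩ := key h1
    refine ⟨(i, false), a, ?_⟩
    have : u = v + off d - Pi.single i 1 := by rw [h2]; abel
    simp [sq, b, this, off, sub_eq_add_neg]

inductive Kind | A | B | C

structure Entry where
  v : Fin 3 → ℤ
  η : Dir
  ζ : Dir
  k : Kind

def Entry.e (x : Entry) : Face 3 := edge x.v x.η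

noncomputable def kw : Kind → ℝ
  | .A => (1.632 : ℝ)
  | .B => (1.604 : ℝ)
  | .C => (1.412 : ℝ)

noncomputable def wt (x : Entry) : ℝ := kw x.k

lemma kw_pos (k) : 0 < kw k := by cases k <;> norm_num [kw]

def Kgood (D : Set (Face 3)) (v : Fin 3 → ℤ) (η ζ : Dir) : Kind → Prop
  | .A => True
  | .B => edge v ζ ∈ D ∧ ∃ ω : Dir, ω.1 ≠ ζ.1 ∧ ω ≠ η ∧ edge v ω ∈ D
  | .C => (edge v ζ ∈ D ∧ ∃ ω : Dir, ω.1 ≠ ζ.1 ∧ ω ≠ η ∧ edge v ω ∈ D) ∧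
      ∃ φ : Dir, φ.1 ≠ η.1 ∧ φ ≠ ζ ∧ edge v φ ∈ D

def Good (K : Finset (Face 3)) (D : Set (Face 3)) (x : Entry) : Prop :=
  x.η.1 ≠ x.ζ.1 ∧ sq x.v x.η x.ζ ∈ K ∧ Kgood D x.v x.η x.ζ x.k

def Inv (K : Finset (Face 3)) : Set (Face 3) → List Entry → Prop
  | _, [] => True
  | D, x :: L => Good K D x ∧ Inv K (insert x.e D) L

lemma Kgood.mono {D D' : Set (Face 3)} (h : D ⊆ D') {v η ζ k} (g : Kgood D v η ζ k) :
    Kgood D' v η ζ k := by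
  cases k
  · trivial
  · exact ⟨h g.1, g.2.imp fun ω t => ⟨t.1, t.2.1, h t.2.2⟩⟩
  · exact ⟨⟨h g.1.1, g.1.2.imp fun ω t => ⟨t.1, t.2.1, h t.2.2⟩⟩,
      g.2.imp fun ω t => ⟨t.1, t.2.1, h t.2.2⟩⟩

lemma Good.mono {K K' D D'} (hK : K ⊆ K') (h : D ⊆ D') {x} (g : Good K D x) : Good K' D' x :=
  ⟨g.1, hK g.2.1, g.2.2.mono h⟩

lemma Inv.mono {K K'} (hK : K ⊆ K') {L} : ∀ {D D'}, D ⊆ D' → Inv K D L → Inv K' D' L := by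
  induction L with
  | nil => intros; trivial
  | cons x L ih =>
    intro D D' h g
    exact ⟨g.1.mono hK h, ih (Set.insert_subset_insert h) g.2⟩

lemma Inv.append {K L L'} : ∀ {D}, Inv K D L → Inv K (D ∪ {e | e ∈ L.map Entry.e}) L' →
    Inv K D (L ++ L') := by
  induction L with
  | nil => intro D _ h; simpa using h
  | cons x L ih =>
    intro D h h'
    refine ⟨h.1, ih h.2 (h'.mono subset_rfl ?_)⟩
    intro e
    simp only [List.map_cons, List.mem_cons, Set.mem_union, Set.mem_ofPred_eq, Set.mem_insert_iff]
    tauto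

/-- entries of the new face `sq v η θ`. -/
def kids (v : Fin 3 → ℤ) (η θ : Dir) (k1 k2 : Kind) : List Entry :=
  [⟨v + vec θ, η, opp θ, .A⟩, ⟨v, θ, η, k1⟩, ⟨v + vec η, θ, opp η, k2⟩]

def P (M : Finset (Face 3)) : Prop :=
  ConnectedFaces M ∧ ∀ e : Face 3, (M.filter fun f => e ∈ faceEdges f).card ≤ 2

def Cons (K : Finset (Face 3)) (D : Set (Face 3)) (m : ℕ) (M : Finset (Face 3)) : Prop :=
  P M ∧ K ⊆ M ∧ M.card = K.card + m ∧ ∀ g ∈ M, g ∉ K → ∀ e ∈ faceEdges g, e ∉ D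

def Cover (K : Finset (Face 3)) (D : Set (Face 3)) (L : List Entry) : Prop :=
  ∀ f ∈ K, ∀ e ∈ faceEdges f, e ∈ D ∨ e ∈ L.map Entry.e

lemma Inv.kids {K D v η θ k1 k2} (h : η.1 ≠ θ.1) (hK : sq v η θ ∈ K)
    (h1 : Kgood D v θ η k1) (h2 : Kgood D (v + vec η) θ (opp η) k2) :
    Inv K D (kids v η θ k1 k2) := by
  refine ⟨⟨h, ?_, trivial⟩, ⟨h.symm, ?_, h1.mono ?_⟩, ⟨h.symm, ?_, h2.mono ?_⟩, trivial⟩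
  · simpa only [sq_opp] using hK
  · simpa only [sq_comm] using hK
  · exact Set.subset_insert _ _
  · simpa only [sq_opp, sq_comm v θ η] using hK
  · exact (Set.subset_insert _ _).trans (Set.subset_insert _ _)

/-- base case -/
lemma base {K : Finset (Face 3)} {D m M} (hK : K.Nonempty) (hc : Cover K D []) (h : Cons K D m M) :
    M = K := by
  obtain ⟨⟨hcon, -⟩, hKM, -, hD⟩ := h
  refine Finset.Subset.antisymm ?_ hKM
  obtain ⟨f, hf⟩ := hK
  intro g hg
  have := hcon f (hKM hf) g hg
  induction this with
  | refl => exact hf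
  | @tail b c _ hbc ih =>
    have hb := ih hbc.1
    by_contra hcK
    obtain ⟨-, e, he1, he2⟩ := hbc.2.2
    have := hc b hb e he1
    simp only [List.map_nil, List.not_mem_nil, or_false] at this
    exact hD c hbc.2.1 hcK e he2 this

lemma cons_add {K : Finset (Face 3)} {D m M v η ζ θ} (hηζ : η.1 ≠ ζ.1) (hηθ : η.1 ≠ θ.1)
    (hf : sq v η ζ ∈ K) (h : Cons K D m M) (hg : sq v η θ ∈ M) (hgK : sq v η θ ∉ K) :
    ∃ m', m = m' + 1 ∧
      Cons (insert (sq v η θ) K) (insert (edge v η) D) m' M := by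
  obtain ⟨hP, hKM, hcard, hD⟩ := h
  have hsub : insert (sq v η θ) K ⊆ M := Finset.insert_subset hg hKM
  have hc := Finset.card_le_card hsub
  have hci : (insert (sq v η θ) K).card = K.card + 1 := Finset.card_insert_of_notMem hgK
  refine ⟨m - 1, by omega, hP, hsub, by omega, ?_⟩
  intro g' hg' hg'K e he heD
  rw [Finset.mem_insert, not_or] at hg'K
  rcases heD with rfl | heD
  · have h2 := hP.2 (edge v η)
    have h3 : ({sq v η ζ, sq v η θ, g'} : Finset (Face 3)) ⊆
        M.filter fun f => edge v η ∈ faceEdges f := by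
      intro y hy
      simp only [Finset.mem_insert, Finset.mem_singleton] at hy
      rw [Finset.mem_filter]
      rcases hy with rfl | rfl | rfl
      · exact ⟨hKM hf, by rw [mem_sq _ _ _ hηζ]; tauto⟩
      · exact ⟨hg, by rw [mem_sq _ _ _ hηθ]; tauto⟩
      · exact ⟨hg', he⟩
    have h4 := Finset.card_le_card h3
    rw [Finset.card_eq_three.mpr ⟨sq v η ζ, sq v η θ, g', fun h => hgK (h ▸ hf), fun h => hg'K.2 (h ▸ hf),
      fun h => hg'K.1 h.symm, rfl⟩] at h4
    omega
  · exact hD g' hg' hg'K.2 e he heD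

def k1 (ζ θ : Dir) : Kind → Kind
  | .A => if θ = opp ζ then .B else .C
  | _ => .C
def k2 (ζ θ : Dir) : Kind := if θ = opp ζ then .B else .C

def T (η ζ : Dir) : Finset Dir := Finset.univ.filter fun θ => θ.1 ≠ η.1 ∧ θ ≠ ζ

lemma dir_fact : ∀ η ζ θ : Dir, η.1 ≠ ζ.1 → θ ∈ T η ζ → θ ≠ opp ζ → ζ.1 ≠ θ.1 := by decide

lemma Tcard : ∀ η ζ : Dir, η.1 ≠ ζ.1 → ((T η ζ).filter (· = opp ζ)).card ≤ 1 ∧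
    ((T η ζ).filter (¬ · = opp ζ)).card ≤ 2 := by decide

lemma Tcard2 : ∀ η ζ φ : Dir, η.1 ≠ ζ.1 → φ.1 ≠ η.1 → φ ≠ ζ → ((T η ζ).erase φ).card ≤ 2 := by
  decide

lemma opp_fst (d : Dir) : (opp d).1 = d.1 := rfl

lemma kids_good {D : Set (Face 3)} {v η ζ θ} {k : Kind} (hηζ : η.1 ≠ ζ.1) (hθ : θ ∈ T η ζ)
    (hk : Kgood D v η ζ k) (he : edge v η ∈ D) (hz : edge v ζ ∈ D)
    (hz' : edge (v + vec η) ζ ∈ D) :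
    Kgood D v θ η (k1 ζ θ k) ∧ Kgood D (v + vec η) θ (opp η) (k2 ζ θ) := by
  have hθ' := hθ
  simp only [T, Finset.mem_filter, Finset.mem_univ, true_and] at hθ'
  obtain ⟨hθη, hθζ⟩ := hθ'
  have b1 : Kgood D v θ η .B := ⟨he, ζ, hηζ.symm, hθζ.symm, hz⟩
  have b2 : Kgood D (v + vec η) θ (opp η) .B :=
    ⟨by rwa [edge_opp], ζ, by rw [opp_fst]; exact hηζ.symm, hθζ.symm, hz'⟩
  have hne : ζ ≠ η := by rintro rfl; exact hηζ rfl
  have hne' : ζ ≠ opp η := by rintro rfl; exact hηζ rfl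
  by_cases hfl : θ = opp ζ
  · have hk2 : k2 ζ θ = .B := by simp [k2, hfl]
    rw [hk2]
    refine ⟨?_, b2⟩
    have aux : (edge v ζ ∈ D ∧ ∃ ω : Dir, ω.1 ≠ ζ.1 ∧ ω ≠ η ∧ edge v ω ∈ D) →
        Kgood D v θ η .C := by
      rintro ⟨-, ω, h1, h2, h3⟩
      exact ⟨b1, ω, by rw [hfl]; exact h1, h2, h3⟩
    cases k
    · simpa [k1, hfl] using b1
    · exact aux hk
    · exact aux hk.1
  · have h := dir_fact η ζ θ hηζ hθ hfl
    have c1 : Kgood D v θ η .C := ⟨b1, ζ, h, hne, hz⟩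
    have c2 : Kgood D (v + vec η) θ (opp η) .C := ⟨b2, ζ, h, hne', hz'⟩
    constructor
    · cases k <;> simpa [k1, hfl] using c1
    · simpa [k2, hfl] using c2

/-- allowed directions -/
lemma exists_T (D : Set (Face 3)) (v η ζ) (k : Kind) (h : η.1 ≠ ζ.1) (hk : Kgood D v η ζ k) :
    ∃ S ⊆ T η ζ, (∀ θ ∈ T η ζ, edge v θ ∉ D → θ ∈ S) ∧
      1 + (1 / (17.1 : ℝ)) * ∑ θ ∈ S, ((1.632 : ℝ) * kw (k1 ζ θ k) * kw (k2 ζ θ)) ≤ kw k := by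
  obtain ⟨h1, h2⟩ := Tcard η ζ h
  have key : ∀ S ⊆ T η ζ, ∃ p q : ℕ, p ≤ 1 ∧ q ≤ 2 ∧ p + q = S.card ∧
      ∀ F B : ℝ, ∑ θ ∈ S, (if θ = opp ζ then F else B) = p * F + q * B := by
    intro S hS
    refine ⟨(S.filter (· = opp ζ)).card, (S.filter (¬ · = opp ζ)).card,
      (Finset.card_le_card (Finset.filter_subset_filter _ hS)).trans h1,
      (Finset.card_le_card (Finset.filter_subset_filter _ hS)).trans h2,
      Finset.card_filter_add_card_filter_not _, ?_⟩
    intro F B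
    rw [Finset.sum_ite, Finset.sum_const, Finset.sum_const, nsmul_eq_mul, nsmul_eq_mul]
  have hA : ∀ θ, (1.632 : ℝ) * kw (k1 ζ θ .A) * kw (k2 ζ θ) =
      if θ = opp ζ then (1.632 : ℝ) * kw .B * kw .B else (1.632 : ℝ) * kw .C * kw .C := by
    intro θ; by_cases hh : θ = opp ζ <;> simp [k1, k2, hh]
  have hB : ∀ θ, (1.632 : ℝ) * kw .C * kw (k2 ζ θ) =
      if θ = opp ζ then (1.632 : ℝ) * kw .C * kw .B else (1.632 : ℝ) * kw .C * kw .C := by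
    intro θ; by_cases hh : θ = opp ζ <;> simp [k2, hh]
  cases k
  · refine ⟨T η ζ, subset_rfl, fun θ h _ => h, ?_⟩
    obtain ⟨p, q, hp, hq, -, hs⟩ := key _ subset_rfl
    rw [Finset.sum_congr rfl fun θ _ => hA θ, hs]
    have hp' : (p : ℝ) ≤ 1 := by exact_mod_cast hp
    have hq' : (q : ℝ) ≤ 2 := by exact_mod_cast hq
    simp only [kw]
    linarith
  · refine ⟨T η ζ, subset_rfl, fun θ h _ => h, ?_⟩
    obtain ⟨p, q, hp, hq, -, hs⟩ := key _ subset_rfl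
    simp only [k1]
    rw [Finset.sum_congr rfl fun θ _ => hB θ, hs]
    have hp' : (p : ℝ) ≤ 1 := by exact_mod_cast hp
    have hq' : (q : ℝ) ≤ 2 := by exact_mod_cast hq
    simp only [kw]
    linarith
  · obtain ⟨-, φ, hφ1, hφ2, hφ⟩ := hk
    refine ⟨(T η ζ).erase φ, Finset.erase_subset _ _, fun θ h h' => ?_, ?_⟩
    · rw [Finset.mem_erase]
      exact ⟨by rintro rfl; exact h' hφ, h⟩
    obtain ⟨p, q, hp, hq, hpq, hs⟩ := key _ (Finset.erase_subset φ _)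
    simp only [k1]
    rw [Finset.sum_congr rfl fun θ _ => hB θ, hs]
    have h3 := Tcard2 η ζ φ h hφ1 hφ2
    have hp' : (p : ℝ) ≤ 1 := by exact_mod_cast hp
    have hq' : (p : ℝ) + q ≤ 2 := by exact_mod_cast (hpq.trans_le h3)
    simp only [kw]
    linarith

lemma main : ∀ (N : ℕ) (K : Finset (Face 3)) (D : Set (Face 3)) (L : List Entry) (m : ℕ),
    3 * m + L.length < N → K.Nonempty → Inv K D L → Cover K D L →
    ∀ 𝒮 : Finset (Finset (Face 3)), (∀ M ∈ 𝒮, Cons K D m M) →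
      (𝒮.card : ℝ) ≤ (17.1 : ℝ) ^ m * (L.map wt).prod := by
  classical
  intro N
  induction N with
  | zero => intro _ _ _ _ h; omega
  | succ N ih =>
  intro K D L m hN hK hI hC 𝒮 h𝒮
  rcases L with _ | ⟨x, L⟩
  · have : 𝒮 ⊆ {K} := by
      intro M hM
      rw [Finset.mem_singleton]
      exact base hK hC (h𝒮 M hM)
    have h1 := Finset.card_le_card this
    rw [Finset.card_singleton] at h1
    have h2 : (1 : ℝ) ≤ (17.1 : ℝ) ^ m := one_le_pow₀ (by norm_num)
    have h3 : (𝒮.card : ℝ) ≤ 1 := by exact_mod_cast h1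
    simpa using h3.trans h2
  · obtain ⟨v, η, ζ, k⟩ := x
    obtain ⟨⟨hηζ, hfK, hk⟩, hI'⟩ := hI
    simp only at hηζ hfK hk
    simp only [Entry.e] at hI'
    obtain ⟨S, hST, hS, hw⟩ := exists_T D v η ζ k hηζ hk
    simp only [List.length_cons] at hN
    set W := (L.map wt).prod with hW
    have hW0 : 0 ≤ W := List.prod_nonneg (by
      intro a ha
      obtain ⟨y, -, rfl⟩ := List.mem_map.1 ha
      exact (kw_pos _).le)
    -- no new face
    have e0 : ((𝒮.filter fun M => ∀ g ∈ M, g ∉ K → edge v η ∉ faceEdges g).card : ℝ) ≤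
        (17.1 : ℝ) ^ m * W := by
      refine ih K (insert (edge v η) D) L m (by omega) hK hI' ?_ _ ?_
      · intro f hf e he
        have := hC f hf e he
        simp only [List.map_cons, List.mem_cons, Entry.e] at this
        rcases this with h | h | h
        · exact Or.inl (Or.inr h)
        · exact Or.inl (Or.inl h)
        · exact Or.inr h
      · intro M hM
        rw [Finset.mem_filter] at hM
        obtain ⟨a, b, c, d⟩ := h𝒮 M hM.1
        refine ⟨a, b, c, fun g hg hgK e he heD => ?_⟩
        rcases heD with rfl | heD
        · exact hM.2 g hg hgK he
        · exact d g hg hgK e he heD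
    have e1 : ∀ θ ∈ S, ((𝒮.filter fun M => sq v η θ ∈ M ∧ sq v η θ ∉ K).card : ℝ) ≤
        (17.1 : ℝ) ^ m * W * ((1 / (17.1 : ℝ)) * ((1.632 : ℝ) * kw (k1 ζ θ k) * kw (k2 ζ θ))) := by
      intro θ hθ
      have hθT := hST hθ
      have hηθ : η.1 ≠ θ.1 := by
        simp only [T, Finset.mem_filter] at hθT
        exact hθT.2.1.symm
      rcases (𝒮.filter fun M => sq v η θ ∈ M ∧ sq v η θ ∉ K).eq_empty_or_nonempty with h | h
      · rw [h]
        have := kw_pos (k1 ζ θ k)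
        have := kw_pos (k2 ζ θ)
        simp only [Finset.card_empty, Nat.cast_zero]
        positivity
      · obtain ⟨M0, hM0⟩ := h
        rw [Finset.mem_filter] at hM0
        obtain ⟨m', rfl, -⟩ := cons_add hηζ hηθ hfK (h𝒮 M0 hM0.1) hM0.2.1 hM0.2.2
        have := ih (insert (sq v η θ) K) (insert (edge v η) D)
          (L ++ kids v η θ (k1 ζ θ k) (k2 ζ θ)) m' (by simp [kids]; omega)
          (Finset.insert_nonempty _ _) ?_ ?_
          (𝒮.filter fun M => sq v η θ ∈ M ∧ sq v η θ ∉ K) ?_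
        · refine this.trans (le_of_eq ?_)
          simp only [List.map_append, List.prod_append, ← hW, kids, List.map_cons, List.map_nil,
            List.prod_cons, List.prod_nil, wt, pow_succ]
          simp only [kw]
          ring
        · refine Inv.append (hI'.mono (Finset.subset_insert _ _) subset_rfl) ?_
          have hd : ∀ e ∈ faceEdges (sq v η ζ),
              e ∈ insert (edge v η) D ∪ {e | e ∈ L.map Entry.e} := by
            intro e he
            have := hC _ hfK e he
            simp only [List.map_cons, List.mem_cons, Entry.e] at this
            rcases this with h | h | h
            · exact Or.inl (Or.inr h)
            · exact Or.inl (Or.inl h)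
            · exact Or.inr h
          have hg := kids_good (D := insert (edge v η) D ∪ {e | e ∈ L.map Entry.e})
            hηζ hθT (hk.mono ((Set.subset_insert _ _).trans Set.subset_union_left))
            (hd _ (by rw [mem_sq _ _ _ hηζ]; tauto)) (hd _ (by rw [mem_sq _ _ _ hηζ]; tauto))
            (hd _ (by rw [mem_sq _ _ _ hηζ]; tauto))
          exact Inv.kids hηθ (Finset.mem_insert_self _ _) hg.1 hg.2
        · intro f hf e he
          rw [Finset.mem_insert] at hf
          simp only [List.map_append, List.mem_append, kids, List.map_cons, List.mem_cons,
            Entry.e, List.map_nil, List.not_mem_nil, or_false, Set.mem_insert_iff]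
          rcases hf with rfl | hf
          · rw [mem_sq _ _ _ hηθ] at he
            tauto
          · have := hC f hf e he
            simp only [List.map_cons, List.mem_cons, Entry.e] at this
            tauto
        · intro M hM
          rw [Finset.mem_filter] at hM
          obtain ⟨m'', hm, h⟩ := cons_add hηζ hηθ hfK (h𝒮 M hM.1) hM.2.1 hM.2.2
          obtain rfl : m' = m'' := by omega
          exact h
    have hcov : 𝒮 ⊆ (𝒮.filter fun M => ∀ g ∈ M, g ∉ K → edge v η ∉ faceEdges g) ∪
        S.biUnion fun θ => 𝒮.filter fun M => sq v η θ ∈ M ∧ sq v η θ ∉ K := by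
      intro M hM
      rw [Finset.mem_union, Finset.mem_filter, Finset.mem_biUnion]
      by_cases hc : ∀ g ∈ M, g ∉ K → edge v η ∉ faceEdges g
      · exact Or.inl ⟨hM, hc⟩
      · push Not at hc
        obtain ⟨g, hg, hgK, hge⟩ := hc
        obtain ⟨θ, hθ, rfl⟩ := exists_sq v η g hge
        refine Or.inr ⟨θ, hS θ ?_ ?_, Finset.mem_filter.2 ⟨hM, hg, hgK⟩⟩
        · simp only [T, Finset.mem_filter, Finset.mem_univ, true_and]
          exact ⟨hθ, by rintro rfl; exact hgK hfK⟩
        · intro hD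
          refine (h𝒮 M hM).2.2.2 _ hg hgK _ ?_ hD
          rw [mem_sq _ _ _ hθ.symm]; tauto
    have hcard : (𝒮.card : ℝ) ≤
        ((𝒮.filter fun M => ∀ g ∈ M, g ∉ K → edge v η ∉ faceEdges g).card : ℝ) +
        ∑ θ ∈ S, ((𝒮.filter fun M => sq v η θ ∈ M ∧ sq v η θ ∉ K).card : ℝ) := by
      have := (Finset.card_le_card hcov).trans ((Finset.card_union_le _ _).trans
        (Nat.add_le_add_left Finset.card_biUnion_le _))
      exact_mod_cast this
    have hsum := Finset.sum_le_sum e1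
    rw [← Finset.mul_sum, ← Finset.mul_sum] at hsum
    have hpos : 0 ≤ (17.1 : ℝ) ^ m * W := by positivity
    have hfin := mul_le_mul_of_nonneg_left hw hpos
    simp only [List.map_cons, List.prod_cons, ← hW]
    have : wt ⟨v, η, ζ, k⟩ = kw k := rfl
    rw [this]
    linarith

lemma root_bound (d d' : Dir) (h : d.1 ≠ d'.1) (n : ℕ) (𝒮 : Finset (Finset (Face 3)))
    (h𝒮 : ∀ M ∈ 𝒮, IsSAM 3 2 n M ∧ sq 0 d d' ∈ M) :
    (𝒮.card : ℝ) ≤ (17.1 : ℝ) ^ n * (1.632 : ℝ) ^ 4 := by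
  have := main _ {sq 0 d d'} ∅ [⟨0, d, d', .A⟩, ⟨0, d', d, .A⟩, ⟨0 + vec d, d', opp d, .A⟩,
    ⟨0 + vec d', d, opp d', .A⟩] (n - 1) (Nat.lt_succ_self _) (by simp) ?_ ?_ 𝒮 ?_
  · refine this.trans ?_
    simp only [List.map_cons, List.map_nil, List.prod_cons, List.prod_nil, wt, kw]
    have : ((17.1 : ℝ) : ℝ) ^ (n - 1) ≤ (17.1 : ℝ) ^ n := pow_le_pow_right₀ (by norm_num) (by omega)
    linarith
  · refine ⟨⟨h, ?_, trivial⟩, ⟨h.symm, ?_, trivial⟩, ⟨h.symm, ?_, trivial⟩, ⟨h, ?_, trivial⟩,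
      trivial⟩ <;> simp only [Finset.mem_singleton]
    · exact sq_comm _ _ _
    · rw [sq_opp, sq_comm]
    · rw [sq_opp]
  · intro f hf e he
    rw [Finset.mem_singleton] at hf
    subst hf
    rw [mem_sq _ _ _ h] at he
    simp only [List.map_cons, List.map_nil, List.mem_cons, List.not_mem_nil, Entry.e, or_false]
    tauto
  · intro M hM
    obtain ⟨⟨h1, h2, h3, h4⟩, h5⟩ := h𝒮 M hM
    have : 0 < M.card := Finset.card_pos.2 ⟨_, h5⟩
    refine ⟨⟨h3, h4⟩, by simpa using h5, ?_, fun _ _ _ _ _ => id⟩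
    rw [Finset.card_singleton]; omega

end Sas

namespace Sas

lemma tr_mem {t : Fin 3 → ℤ} {e f : Face 3} :
    translateFace t e ∈ faceEdges (translateFace t f) ↔ e ∈ faceEdges f := by
  obtain ⟨S, u⟩ := e
  obtain ⟨R, w⟩ := f
  simp only [faceEdges, translateFace, Finset.mem_biUnion, Finset.mem_insert,
    Finset.mem_singleton, Prod.mk.injEq, add_left_inj, add_right_comm w t]

lemma tr_inj (t : Fin 3 → ℤ) : Function.Injective (translateFace t) := by
  rintro ⟨S, u⟩ ⟨R, w⟩ h
  simpa [translateFace] using h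

lemma tr_neg (t : Fin 3 → ℤ) (e : Face 3) : translateFace t (translateFace (-t) e) = e := by
  simp [translateFace]

lemma tr_sam {n : ℕ} {A : Finset (Face 3)} (t : Fin 3 → ℤ) (h : IsSAM 3 2 n A) :
    IsSAM 3 2 n (A.image (translateFace t)) := by
  obtain ⟨h1, h2, h3, h4⟩ := h
  refine ⟨by rw [Finset.card_image_of_injective _ (tr_inj t), h1], ?_, ?_, ?_⟩
  · intro f hf
    obtain ⟨g, hg, rfl⟩ := Finset.mem_image.1 hf
    exact h2 g hg
  · intro f hf g hg
    obtain ⟨f, hf', rfl⟩ := Finset.mem_image.1 hf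
    obtain ⟨g, hg', rfl⟩ := Finset.mem_image.1 hg
    refine Relation.ReflTransGen.lift (translateFace t) ?_ _ _ (h3 f hf' g hg')
    rintro a b ⟨ha, hb, hab, e, he1, he2⟩
    exact ⟨Finset.mem_image_of_mem _ ha, Finset.mem_image_of_mem _ hb,
      fun h => hab (tr_inj t h), translateFace t e, tr_mem.2 he1, tr_mem.2 he2⟩
  · intro e
    rw [Finset.filter_image]
    refine Finset.card_image_le.trans ((Finset.card_le_card ?_).trans (h4 (translateFace (-t) e)))
    intro f hf
    rw [Finset.mem_filter] at hf ⊢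
    refine ⟨hf.1, ?_⟩
    rw [← tr_mem (t := t), tr_neg]
    exact hf.2

lemma count_bound (n : ℕ) (hn : 1 ≤ n) :
    (samCount 3 2 n : ℝ) ≤ 9 * (17.1 ^ n * 1.632 ^ 4) := by
  classical
  unfold samCount
  set r := fun A B : {M : Finset (Face 3) // IsSAM 3 2 n M} => TransEquiv A.val B.val with hr
  rcases finite_or_infinite (Quot r) with hf | hf
  swap
  · rw [Nat.card_eq_zero_of_infinite, Nat.cast_zero]; positivity
  have := Fintype.ofFinite (Quot r)
  have hrep : ∀ q : Quot r, ∃ M : {M : Finset (Face 3) // IsSAM 3 2 n M}, Quot.mk r M = q ∧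
      ∃ p : Fin 3 × Fin 3, p.1 ≠ p.2 ∧ sq 0 (p.1, true) (p.2, true) ∈ M.val := by
    intro q
    obtain ⟨⟨A, hA⟩, rfl⟩ := Quot.exists_rep q
    obtain ⟨f, hfA⟩ : A.Nonempty := Finset.card_pos.1 (by rw [hA.1]; omega)
    refine ⟨⟨A.image (translateFace (-f.2)), tr_sam _ hA⟩, (Quot.sound ⟨-f.2, rfl⟩).symm, ?_⟩
    obtain ⟨i, j, hij, hS⟩ := Finset.card_eq_two.1 (hA.2.1 f hfA)
    refine ⟨(i, j), hij, Finset.mem_image.2 ⟨f, hfA, ?_⟩⟩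
    simp [translateFace, sq, off, hS]
  choose rep hrep1 hrep2 using hrep
  have hinj : Function.Injective fun q => (rep q).val := by
    intro a b h
    rw [← hrep1 a, ← hrep1 b, Subtype.ext h]
  set 𝒮 : Finset (Finset (Face 3)) := Finset.univ.image fun q => (rep q).val
  have hc : 𝒮.card = Nat.card (Quot r) := by
    rw [Finset.card_image_of_injective _ hinj, Finset.card_univ, Nat.card_eq_fintype_card]
  rw [← hc]
  have hcov : 𝒮 ⊆ (Finset.univ : Finset (Fin 3 × Fin 3)).biUnion fun p =>
      𝒮.filter fun M => p.1 ≠ p.2 ∧ sq 0 (p.1, true) (p.2, true) ∈ M := by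
    intro M hM
    obtain ⟨q, -, rfl⟩ := Finset.mem_image.1 hM
    obtain ⟨p, hp⟩ := hrep2 q
    exact Finset.mem_biUnion.2 ⟨p, Finset.mem_univ _, Finset.mem_filter.2 ⟨hM, hp⟩⟩
  have h1 : (𝒮.card : ℝ) ≤ ∑ p : Fin 3 × Fin 3,
      ((𝒮.filter fun M => p.1 ≠ p.2 ∧ sq 0 (p.1, true) (p.2, true) ∈ M).card : ℝ) := by
    exact_mod_cast (Finset.card_le_card hcov).trans Finset.card_biUnion_le
  refine h1.trans ((Finset.sum_le_card_nsmul _ _ (17.1 ^ n * 1.632 ^ 4) ?_).trans ?_)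
  · intro p _
    by_cases hp : p.1 ≠ p.2
    · refine root_bound (p.1, true) (p.2, true) hp n _ ?_
      intro M hM
      obtain ⟨hM, -, h⟩ := Finset.mem_filter.1 hM
      obtain ⟨q, -, rfl⟩ := Finset.mem_image.1 hM
      exact ⟨(rep q).2, h⟩
    · simp only [hp, false_and, Finset.filter_false, Finset.card_empty, Nat.cast_zero]
      positivity
  · simp [nsmul_eq_mul]

end Sas

theorem sas_cubic_limsup_upper_bound :
    limsup (fun n : ℕ => (samCount 3 2 n : ℝ) ^ (1 / (n : ℝ))) atTop ≤ 17.11728 := by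
  have hcob : IsCoboundedUnder (· ≤ ·) atTop
      (fun n : ℕ => (samCount 3 2 n : ℝ) ^ (1 / (n : ℝ))) :=
    isCoboundedUnder_le_of_le atTop (x := 0) fun n => by positivity
  refine limsup_le_of_le hcob ?_
  have ht : Tendsto (fun n : ℕ => ((17.11728 : ℝ) / 17.1) ^ n) atTop atTop :=
    tendsto_pow_atTop_atTop_of_one_lt (by norm_num)
  filter_upwards [ht.eventually_ge_atTop (9 * 1.632 ^ 4), eventually_ge_atTop 1] with n h1 h2
  have h3 : (samCount 3 2 n : ℝ) ≤ 17.11728 ^ n := by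
    refine (Sas.count_bound n h2).trans ?_
    rw [div_pow, le_div_iff₀ (by positivity)] at h1
    linarith
  calc (samCount 3 2 n : ℝ) ^ (1 / (n : ℝ)) ≤ ((17.11728 : ℝ) ^ n) ^ (1 / (n : ℝ)) :=
        Real.rpow_le_rpow (by positivity) h3 (by positivity)
    _ = 17.11728 := by
        rw [one_div]
        exact Real.pow_rpow_inv_natCast (by norm_num) (by omega)
end

section
/- For every n ≥ 1, the number a_n of fixed polyominoes with n cells satisfies a_n ≤ C(3n, n−1), where C(3n, n−1) is the binomial coefficient 3n choose n−1; consequently limsup_{n→∞} (a_n)^{1/n} ≤ 27/4. -/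
open Filter

/-- Two cells of the square lattice are adjacent when they differ by a signed
standard unit vector. -/
def CellAdj (a b : Fin 2 → ℤ) : Prop :=
  ∃ i : Fin 2, a - b = Pi.single i 1 ∨ a - b = Pi.single i (-1)

/-- A set of cells is connected with respect to adjacency. -/
def ConnectedCells (P : Finset (Fin 2 → ℤ)) : Prop :=
  ∀ a ∈ P, ∀ b ∈ P, Relation.ReflTransGen (fun x y => x ∈ P ∧ y ∈ P ∧ CellAdj x y) a b

/-- A fixed polyomino with `n` cells: a connected set of `n` cells of the square
lattice. -/
def IsPolyomino (n : ℕ) (P : Finset (Fin 2 → ℤ)) : Prop :=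
  P.card = n ∧ ConnectedCells P

/-- The number of fixed polyominoes with `n` cells, identified up to translation. -/
noncomputable def polyominoCount (n : ℕ) : ℕ :=
  Nat.card (Quot fun A B : {P : Finset (Fin 2 → ℤ) // IsPolyomino n P} =>
    ∃ t : Fin 2 → ℤ, A.val.image (· + t) = B.val)

/-- The four neighbours of a cell. -/
def nbCells (a : Fin 2 → ℤ) : Finset (Fin 2 → ℤ) :=
  {a + Pi.single 0 1, a + Pi.single 0 (-1), a + Pi.single 1 1, a + Pi.single 1 (-1)}

lemma nbCells_card (a : Fin 2 → ℤ) : (nbCells a).card ≤ 4 := Finset.card_le_four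

lemma mem_nbCells (a b : Fin 2 → ℤ) : b ∈ nbCells a ↔ CellAdj a b := by
  have key : ∀ (i : Fin 2) (c : ℤ), a - b = Pi.single i c ↔ b = a + Pi.single i (-c) := by
    intro i c
    rw [Pi.single_neg]
    constructor
    · intro h; rw [← h]; abel
    · intro h; rw [h]; abel
  simp only [nbCells, CellAdj, Finset.mem_insert, Finset.mem_singleton, Fin.exists_fin_two, key,
    neg_neg]
  tauto

lemma cellAdj_symm {a b : Fin 2 → ℤ} (h : CellAdj a b) : CellAdj b a := by
  obtain ⟨i, h⟩ := h
  refine ⟨i, ?_⟩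
  rw [← neg_sub a b]
  rcases h with h | h
  · right; rw [h, Pi.single_neg]
  · left; rw [h, Pi.single_neg, neg_neg]

lemma not_cellAdj_self (a : Fin 2 → ℤ) : ¬ CellAdj a a := by
  rintro ⟨i, h⟩
  rcases h with h | h <;>
  · have := congrFun h i
    simp at this

/-- The undecided neighbours. -/
def undec (I E : Finset (Fin 2 → ℤ)) : Finset (Fin 2 → ℤ) := (I.biUnion nbCells) \ (I ∪ E)

lemma mem_undec {I E : Finset (Fin 2 → ℤ)} {x : Fin 2 → ℤ} :
    x ∈ undec I E ↔ (∃ a ∈ I, CellAdj a x) ∧ x ∉ I ∧ x ∉ E := by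
  simp [undec, mem_nbCells]

lemma undec_exclude {I E : Finset (Fin 2 → ℤ)} {x : Fin 2 → ℤ} (hx : x ∈ undec I E) :
    (undec I (insert x E)).card + 1 ≤ (undec I E).card := by
  have : undec I (insert x E) ⊆ (undec I E).erase x := by
    intro y
    simp only [Finset.mem_erase, mem_undec, Finset.mem_insert]
    tauto
  have h := Finset.card_le_card this
  have := Finset.card_erase_add_one hx
  omega

lemma undec_include {I E : Finset (Fin 2 → ℤ)} {x : Fin 2 → ℤ} (hx : x ∈ undec I E) :
    (undec (insert x I) E).card ≤ (undec I E).card + 2 := by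
  obtain ⟨⟨a, ha, hax⟩, hxI, hxE⟩ := mem_undec.1 hx
  have : undec (insert x I) E ⊆ (undec I E).erase x ∪ (nbCells x).erase a := by
    intro y
    simp only [Finset.mem_union, Finset.mem_erase, mem_undec, Finset.mem_insert, mem_nbCells]
    rintro ⟨⟨b, rfl | hb, hby⟩, hyI, hyE⟩
    · right
      refine ⟨?_, hby⟩
      rintro rfl
      exact hyI (Or.inr ha)
    · left
      exact ⟨fun h => hyI (Or.inl h), ⟨b, hb, hby⟩, fun h => hyI (Or.inr h), hyE⟩
  have h := (Finset.card_le_card this).trans (Finset.card_union_le _ _)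
  have h1 := Finset.card_erase_add_one hx
  have h2 := Finset.card_erase_add_one ((mem_nbCells x a).2 (cellAdj_symm hax))
  have h3 := nbCells_card x
  omega

lemma exists_boundary {P I : Finset (Fin 2 → ℤ)} (hP : ConnectedCells P) (hI : I.Nonempty)
    (hIP : I ⊆ P) (hne : P ≠ I) : ∃ a ∈ I, ∃ b ∈ P, b ∉ I ∧ CellAdj a b := by
  by_contra hcon
  push Not at hcon
  apply hne
  apply Finset.Subset.antisymm _ hIP
  obtain ⟨a, ha⟩ := hI
  intro b hb
  have h := hP a (hIP ha) b hb
  clear hb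
  induction h with
  | refl => exact ha
  | tail _ h ih =>
    by_contra hc
    exact hcon _ ih _ h.2.1 hc h.2.2

lemma count_aux (L : ℕ) : ∀ (m : ℕ) (I E : Finset (Fin 2 → ℤ)), I.Nonempty →
    (undec I E).card + 3 * m ≤ L →
    ∃ S : Finset (Finset (Fin 2 → ℤ)), S.card ≤ L.choose m ∧
      ∀ P, I ⊆ P → Disjoint P E → P.card = I.card + m → ConnectedCells P → P ∈ S := by
  induction L with
  | zero =>
    intro m I E hI h
    obtain rfl : m = 0 := by omega
    refine ⟨{I}, by simp, ?_⟩
    intro P hIP _ hc _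
    rw [Finset.mem_singleton]
    exact (Finset.eq_of_subset_of_card_le hIP (by omega)).symm
  | succ L ih =>
    intro m I E hI h
    rcases m with _ | m
    · refine ⟨{I}, by simp, ?_⟩
      intro P hIP _ hc _
      rw [Finset.mem_singleton]
      exact (Finset.eq_of_subset_of_card_le hIP (by omega)).symm
    rcases (undec I E).eq_empty_or_nonempty with hu | ⟨x, hx⟩
    · refine ⟨∅, by simp, ?_⟩
      intro P hIP hd hc hP
      exfalso
      obtain ⟨a, ha, b, hb, hbI, hab⟩ := exists_boundary hP hI hIP
        (by rintro rfl; omega)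
      have : b ∈ undec I E :=
        mem_undec.2 ⟨⟨a, ha, hab⟩, hbI, Finset.disjoint_left.1 hd hb⟩
      rw [hu] at this
      simp at this
    · have h1 := undec_exclude hx
      have h2 := undec_include hx
      have hxI := (mem_undec.1 hx).2.1
      obtain ⟨S1, hS1, hS1'⟩ := ih (m + 1) I (insert x E) hI (by omega)
      obtain ⟨S2, hS2, hS2'⟩ := ih m (insert x I) E (Finset.insert_nonempty _ _) (by omega)
      refine ⟨S2 ∪ S1, ?_, ?_⟩
      · have := Finset.card_union_le S2 S1
        rw [Nat.choose_succ_succ']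
        omega
      · intro P hIP hd hc hP
        rw [Finset.mem_union]
        by_cases hxP : x ∈ P
        · left
          refine hS2' P (Finset.insert_subset hxP hIP) hd ?_ hP
          rw [Finset.card_insert_of_notMem hxI]
          omega
        · right
          exact hS1' P hIP (Finset.disjoint_insert_right.2 ⟨hxP, hd⟩) hc hP

lemma cellAdj_add (t : Fin 2 → ℤ) {a b : Fin 2 → ℤ} (h : CellAdj a b) :
    CellAdj (a + t) (b + t) := by
  simpa [CellAdj] using h

lemma isPolyomino_image {n : ℕ} {P : Finset (Fin 2 → ℤ)} (h : IsPolyomino n P)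
    (t : Fin 2 → ℤ) : IsPolyomino n (P.image (· + t)) := by
  refine ⟨?_, ?_⟩
  · rw [Finset.card_image_of_injective _ (add_left_injective t)]
    exact h.1
  · intro a ha b hb
    obtain ⟨a, ha0, rfl⟩ := Finset.mem_image.1 ha
    obtain ⟨b, hb0, rfl⟩ := Finset.mem_image.1 hb
    refine Relation.ReflTransGen.lift (· + t) ?_ _ _ (h.2 a ha0 b hb0)
    rintro x y ⟨hx, hy, hxy⟩
    exact ⟨Finset.mem_image_of_mem _ hx, Finset.mem_image_of_mem _ hy, cellAdj_add t hxy⟩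

lemma polyominoCount_le (n : ℕ) (hn : 1 ≤ n) : polyominoCount n ≤ (3 * n).choose (n - 1) := by
  obtain ⟨S, hS, hS'⟩ := count_aux (3 * n) (n - 1) {0} {Pi.single 0 (-1)}
    (Finset.singleton_nonempty _) (by
      have : undec {0} {Pi.single 0 (-1)} ⊆ (nbCells 0).erase (Pi.single 0 (-1)) := by
        intro y
        simp only [mem_undec, Finset.mem_singleton, Finset.mem_erase, mem_nbCells,
          exists_eq_left]
        tauto
      have h1 := Finset.card_le_card this
      have h2 : Pi.single 0 (-1) ∈ nbCells 0 := by simp [nbCells]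
      have h3 := Finset.card_erase_add_one h2
      have h4 := nbCells_card 0
      omega)
  refine le_trans ?_ hS
  have hex : ∀ q : Quot fun A B : {P : Finset (Fin 2 → ℤ) // IsPolyomino n P} =>
      ∃ t : Fin 2 → ℤ, A.val.image (· + t) = B.val,
      ∃ P : {P : Finset (Fin 2 → ℤ) // IsPolyomino n P}, P.val ∈ S ∧ Quot.mk _ P = q := by
    intro q
    induction q using Quot.ind with
    | mk A =>
      obtain ⟨A, hA⟩ := A
      have hne : A.Nonempty := by
        rw [← Finset.card_pos, hA.1]
        omega
      obtain ⟨c, hc, hmin⟩ := Finset.exists_min_image A (fun a => a 0) hne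
      have hB := isPolyomino_image hA (-c)
      refine ⟨⟨A.image (· + -c), hB⟩, ?_, (Quot.sound ⟨-c, rfl⟩).symm⟩
      apply hS'
      · rw [Finset.singleton_subset_iff]
        exact Finset.mem_image.2 ⟨c, hc, by simp⟩
      · rw [Finset.disjoint_singleton_right]
        intro hm
        obtain ⟨a, ha, hac⟩ := Finset.mem_image.1 hm
        have h1 := hmin a ha
        have h2 := congrFun hac 0
        simp at h2
        omega
      · rw [hB.1, Finset.card_singleton]
        omega
      · exact hB.2
  choose f hf hfq using hex
  have hinj : Function.Injective (fun q => (⟨(f q).val, hf q⟩ : S)) := by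
    intro q r hqr
    have h1 : (f q).val = (f r).val := Subtype.mk.inj hqr
    have h2 : f q = f r := Subtype.ext h1
    exact (hfq q).symm.trans ((congrArg _ h2).trans (hfq r))
  have := Nat.card_le_card_of_injective _ hinj
  rw [Nat.card_eq_fintype_card (α := S), Fintype.card_coe] at this
  exact this

lemma choose_bound (n : ℕ) (hn : 1 ≤ n) :
    (((3 * n).choose (n - 1) : ℕ) : ℝ) ≤ (27 / 4 : ℝ) ^ n := by
  have h := add_pow (1 / 2 : ℝ) 1 (3 * n)
  have h1 : (1 / 2 : ℝ) ^ (n - 1) * 1 ^ (3 * n - (n - 1)) * ((3 * n).choose (n - 1) : ℕ)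
      ≤ (1 / 2 + 1 : ℝ) ^ (3 * n) := by
    rw [h]
    exact Finset.single_le_sum (f := fun k => (1 / 2 : ℝ) ^ k * 1 ^ (3 * n - k) *
      ((3 * n).choose k : ℕ)) (fun i _ => by positivity) (by simp; omega)
  rw [one_pow, mul_one, pow_mul] at h1
  have h2 : (1 / 2 : ℝ) ^ n ≤ (1 / 2 : ℝ) ^ (n - 1) :=
    pow_le_pow_of_le_one (by norm_num) (by norm_num) (by omega)
  have h3 : (27 / 4 : ℝ) ^ n = 2 ^ n * ((1 / 2 + 1 : ℝ) ^ 3) ^ n := by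
    rw [← mul_pow]; norm_num
  have h4 : (2 : ℝ) ^ n * (1 / 2 : ℝ) ^ n = 1 := by
    rw [← mul_pow]; norm_num
  set c : ℝ := (((3 * n).choose (n - 1) : ℕ) : ℝ)
  have hc : 0 ≤ c := by positivity
  rw [h3]
  calc c = 2 ^ n * ((1 / 2 : ℝ) ^ n * c) := by rw [← mul_assoc, h4, one_mul]
    _ ≤ 2 ^ n * ((1 / 2 : ℝ) ^ (n - 1) * c) := by gcongr
    _ ≤ _ := by gcongr

theorem polyomino_count_upper_bound :
    (∀ n : ℕ, 1 ≤ n → polyominoCount n ≤ (3 * n).choose (n - 1)) ∧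
      limsup (fun n : ℕ => (polyominoCount n : ℝ) ^ (1 / (n : ℝ))) atTop ≤ 27 / 4 := by
  refine ⟨polyominoCount_le, ?_⟩
  refine limsup_le_of_le ?_ ?_
  · exact isCoboundedUnder_le_of_le atTop (x := 0) (fun n => by positivity)
  · filter_upwards [eventually_ge_atTop 1] with n hn
    have h : (polyominoCount n : ℝ) ≤ (27 / 4 : ℝ) ^ n :=
      le_trans (by exact_mod_cast polyominoCount_le n hn) (choose_bound n hn)
    calc (polyominoCount n : ℝ) ^ (1 / (n : ℝ))
        ≤ ((27 / 4 : ℝ) ^ n) ^ (1 / (n : ℝ)) :=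
          Real.rpow_le_rpow (by positivity) h (by positivity)
      _ = 27 / 4 := by
          rw [one_div]
          exact Real.pow_rpow_inv_natCast (by norm_num) (by omega)
end
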